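/- arXiv:1502.06338 — 6 statements merged into one kernel-verified Lean document; each statement's English description precedes it below -/
import Mathlib

section
/- (Light-tail limit of geometric sums.) Let φ : ℕ → ℝ with φ_i ≥ 0, φ_0 = 0, ∑_{i=1}^∞ φ_i = 1, and assume m := ∑_{i=1}^∞ i φ_i < ∞. Let (a_n)_{n≥1} satisfy 0 < a_n < 1 and n(1−a_n) → λ for some λ > 0. For each n, let I^n be geometric with P[I^n = i] = a_n^i(1−a_n), let (X^j)_{j≥1} be iid positive-integer-valued random variables with P[X^1 = i] = φ_i, independent of I^n, and set Y^n = ∑_{j=1}^{I^n} X^j. Then Y^n/n converges in distribution, as n → ∞, to an exponential random variable with rate λ/m (i.e. with density (λ/m)e^{−(λ/m)x} on [0,∞)). -/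
open MeasureTheory ProbabilityTheory Filter Set

/-- Convolution powers of a sequence. -/
noncomputable def convPow (φ : ℕ → ℝ) : ℕ → ℕ → ℝ
  | 0 => fun i => if i = 0 then 1 else 0
  | (l + 1) => fun k => ∑ j ∈ Finset.range (k + 1), convPow φ l j * φ (k - j)

/-- ψ^a_i = ∑_{l=0}^∞ a^l (φ^{*l})_i. -/
noncomputable def psiSeq (a : ℝ) (φ : ℕ → ℝ) (i : ℕ) : ℝ :=
  ∑' l : ℕ, a ^ l * convPow φ l i

/-- Fourier transform of a sequence indexed by ℕ. -/
noncomputable def fourierSeq (f : ℕ → ℝ) (z : ℝ) : ℂ :=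
  ∑' k : ℕ, (f k : ℂ) * Complex.exp (-(2 * Real.pi * Complex.I * k * z))

/-- Mittag-Leffler function E_{α,α}. -/
noncomputable def mittagLeffler (α u : ℝ) : ℝ :=
  ∑' k : ℕ, u ^ k / Real.Gamma (α * k + α)

/-- f^{α,λ}. -/
noncomputable def mlDensity (α lam s : ℝ) : ℝ :=
  lam * s ^ (α - 1) * mittagLeffler α (-lam * s ^ α)

/-- F^{α,λ}. -/
noncomputable def mlCDF (α lam x : ℝ) : ℝ :=
  ∫ s in (0:ℝ)..x, mlDensity α lam s


lemma aux_exp_integral {E : Type*} [NormedAddCommGroup E] [NormedSpace ℝ E] (r : ℝ) (hr : 0 < r)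
    (g : ℝ → E) :
    ∫ x, g x ∂(expMeasure r) = ∫ x in Set.Ici (0:ℝ), (r * Real.exp (-r * x)) • g x := by
  have h : expMeasure r = volume.withDensity (exponentialPDF r) := rfl
  rw [h, integral_withDensity_eq_integral_toReal_smul
    (by unfold exponentialPDF; fun_prop) (by simp [exponentialPDF]),
    ← integral_indicator measurableSet_Ici]
  congr 1
  ext x
  rw [exponentialPDF_eq]
  by_cases hx : 0 ≤ x
  · rw [Set.indicator_of_mem (by simpa using hx), if_pos hx, ENNReal.toReal_ofReal (by positivity)]
    simp
  · rw [Set.indicator_of_notMem (by simpa using hx), if_neg hx]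
    simp

lemma aux_exp_charFun (r : ℝ) (hr : 0 < r) (t : ℝ) :
    charFun (expMeasure r) t = r / (r - t * Complex.I) := by
  rw [charFun_apply_real, aux_exp_integral r hr, integral_Ici_eq_integral_Ioi]
  have h1 : ∀ x : ℝ, (r * Real.exp (-r * x)) • Complex.exp (t * x * Complex.I)
      = r * Complex.exp ((-r + t * Complex.I) * x) := by
    intro x
    rw [Complex.real_smul]
    push_cast
    rw [mul_assoc, ← Complex.exp_add]
    ring_nf
  simp_rw [h1]
  rw [integral_const_mul, integral_exp_mul_complex_Ioi (by simpa using hr)]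
  have : (r : ℂ) - t * Complex.I ≠ 0 := by
    intro h
    have := congrArg Complex.re h
    simp at this
    exact hr.ne' this
  have h2 : -(r:ℂ) + t * Complex.I ≠ 0 := by
    intro h; apply this; linear_combination -h
  simp
  field_simp
  ring

lemma aux_deriv {Ω : Type*} [MeasurableSpace Ω] (P : Measure Ω) [IsProbabilityMeasure P]
    (φ : ℕ → ℝ) (hφnn : ∀ i, 0 ≤ φ i) 
    (m : ℝ) (hm : HasSum (fun i : ℕ => (i : ℝ) * φ i) m)
    (X : Ω → ℕ) (hX : Measurable X)
    (hXlaw : ∀ i : ℕ, 1 ≤ i → (P {ω | X ω = i}).toReal = φ i) :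
    HasDerivAt (charFun (P.map (fun ω => (X ω : ℝ)))) (m * Complex.I) 0 := by
  have hmc : Measurable (fun ω => (X ω : ℝ)) := by fun_prop
  have : IsProbabilityMeasure (P.map X) := Measure.isProbabilityMeasure_map hX.aemeasurable
  have : IsProbabilityMeasure (P.map (fun ω => (X ω : ℝ))) :=
    Measure.isProbabilityMeasure_map hmc.aemeasurable
  have h0 : ∀ i : ℕ, (P.map X).real {i} * (i:ℝ) = i * φ i := by
    intro i
    rcases Nat.eq_zero_or_pos i with rfl | hi
    · simp
    · rw [← hXlaw i hi, map_measureReal_apply hX (measurableSet_singleton i), mul_comm]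
      rfl
  have hint : Integrable (fun i : ℕ => (i:ℝ)) (P.map X) := by
    refine ⟨by fun_prop, ?_⟩
    rw [hasFiniteIntegral_iff_enorm, lintegral_countable']
    have h1 : ∀ i : ℕ, ‖(i:ℝ)‖ₑ * (P.map X) {i} = ENNReal.ofReal (i * φ i) := by
      intro i
      rw [← h0 i, mul_comm, ENNReal.ofReal_mul (by positivity), ofReal_measureReal,
        Real.enorm_eq_ofReal (by positivity)]
    simp_rw [h1]
    rw [← ENNReal.ofReal_tsum_of_nonneg (fun i => mul_nonneg (by positivity) (hφnn i)) hm.summable]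
    exact ENNReal.ofReal_lt_top
  have hI : Integrable (fun ω => (X ω : ℝ)) P := hint.comp_measurable hX
  have hval : ∫ ω, (X ω : ℝ) ∂P = m := by
    rw [← integral_map (f := fun i : ℕ => (i:ℝ)) hX.aemeasurable (by fun_prop), integral_countable hint]
    simp only [smul_eq_mul, h0]
    exact hm.tsum_eq
  have hL : MemLp id ((1:ℕ):ENNReal) (P.map (fun ω => (X ω : ℝ))) := by
    simp only [Nat.cast_one]
    rw [memLp_one_iff_integrable, integrable_map_measure (by fun_prop) hmc.aemeasurable]
    exact hI
  have hd := ((contDiff_charFun hL).differentiable (by simp)) 0 |>.hasDerivAt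
  have h3 := iteratedDeriv_charFun_zero hL
  rw [iteratedDeriv_one] at h3
  rw [h3] at hd
  rw [integral_map hmc.aemeasurable (by fun_prop)] at hd
  simp only [pow_one] at hd
  rw [hval, mul_comm] at hd
  exact hd

lemma aux_charFun {Ω : Type*} [MeasurableSpace Ω] (P : Measure Ω) [IsProbabilityMeasure P]
    (a : ℝ) (ha : 0 < a ∧ a < 1)
    (I : Ω → ℕ) (X : ℕ → Ω → ℕ)
    (hI : Measurable I) (hX : ∀ j, Measurable (X j))
    (hIlaw : ∀ i : ℕ, (P {ω | I ω = i}).toReal = a ^ i * (1 - a))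
    (hXid : ∀ j, 1 ≤ j → Measure.map (X j) P = Measure.map (X 1) P)
    (hindep : iIndepFun (fun j : ℕ => if j = 0 then I else X j) P) (s : ℝ) :
    ∫ ω, Complex.exp (s * ((∑ j ∈ Finset.Icc 1 (I ω), X j ω : ℕ) : ℝ) * Complex.I) ∂P =
      (1 - a) / (1 - a * charFun (P.map (fun ω => (X 1 ω : ℝ))) s) := by
  set g := charFun (P.map (fun ω => (X 1 ω : ℝ))) s with hg
  have hX1 : Measurable (fun ω => (X 1 ω : ℝ)) := by fun_prop
  have : IsProbabilityMeasure (P.map (fun ω => (X 1 ω : ℝ))) :=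
    Measure.isProbabilityMeasure_map hX1.aemeasurable
  have hg1 : ‖g‖ ≤ 1 := norm_charFun_le_one s
  have hZm : ∀ j : ℕ, Measurable (if j = 0 then I else X j) := by
    intro j; split_ifs; exacts [hI, hX j]
  have hS : ∀ k : ℕ, ∫ ω, Complex.exp (s * ((∑ j ∈ Finset.Icc 1 k, X j ω : ℕ) : ℝ) * Complex.I) ∂P
      = g ^ k := by
    intro k
    have h1 := ((hindep.comp (fun _ (i:ℕ) => (i:ℝ)) (fun _ => by fun_prop)).restrict
      (Finset.Icc 1 k)).charFun_map_fun_finsetSum_eq_prod (s := Finset.Icc 1 k)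
      (fun j _ => (measurable_from_nat.comp (hZm j)).aemeasurable)
    have h2 := congrFun h1 s
    rw [Finset.prod_apply, Finset.prod_congr rfl (g := fun _ => g)] at h2
    · rw [Finset.prod_const, Nat.card_Icc, Nat.add_sub_cancel] at h2
      rw [← h2, charFun_apply_real, integral_map]
      · congr 1
        ext ω
        congr 4
        push_cast
        refine Finset.sum_congr rfl fun j hj => ?_
        have : j ≠ 0 := by have := Finset.mem_Icc.1 hj; omega
        simp [this]
      · exact (Finset.measurable_fun_sum (Finset.Icc 1 k) fun j _ => measurable_from_nat.comp (hZm j)).aemeasurable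
      · fun_prop
    · intro j hj
      have h1j := (Finset.mem_Icc.1 hj).1
      have : j ≠ 0 := by omega
      rw [hg]
      congr 1
      have e1 : P.map (fun ω => (X j ω : ℝ)) = P.map (fun ω => (X 1 ω : ℝ)) := by
        have := congrArg (Measure.map (fun i : ℕ => (i:ℝ))) (hXid j h1j)
        rwa [Measure.map_map (by fun_prop) (hX _), Measure.map_map (by fun_prop) (hX _)] at this
      rw [← e1]
      simp only [if_neg this]
      rfl
  have hYm : Measurable (fun ω => ∑ j ∈ Finset.Icc 1 (I ω), X j ω) := by
    have h : Measurable (fun p : ℕ × Ω => ∑ j ∈ Finset.Icc 1 p.1, X j p.2) :=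
      measurable_from_prod_countable_right fun k =>
        Finset.measurable_fun_sum (Finset.Icc 1 k) fun j _ => hX j
    exact h.comp (hI.prodMk measurable_id)
  have hset : ∀ k : ℕ, MeasurableSet (I ⁻¹' {k}) := fun k => hI (measurableSet_singleton k)
  have hF : Integrable (fun ω => Complex.exp (s * ((∑ j ∈ Finset.Icc 1 (I ω), X j ω : ℕ) : ℝ)
      * Complex.I)) P := by
    refine Integrable.of_bound (C := 1) ?_ (ae_of_all _ fun ω => ?_)
    · have h : Measurable (fun i : ℕ => Complex.exp (s * (i : ℝ) * Complex.I)) := by fun_prop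
      exact (h.comp hYm).aestronglyMeasurable
    · rw [← Complex.ofReal_mul, Complex.norm_exp_ofReal_mul_I]
  have hsum := hasSum_integral_iUnion (μ := P) (s := fun k => I ⁻¹' {k}) hset
    (fun i j hij => Disjoint.preimage _ (by simpa using hij)) hF.integrableOn
  have hU : (⋃ k, I ⁻¹' {k}) = univ := by ext; simp
  rw [hU, Measure.restrict_univ] at hsum
  rw [← hsum.tsum_eq]
  have hterm : ∀ k : ℕ, ∫ ω in I ⁻¹' {k}, Complex.exp (s *
      ((∑ j ∈ Finset.Icc 1 (I ω), X j ω : ℕ) : ℝ) * Complex.I) ∂P = (1 - a) * (a * g) ^ k := by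
    intro k
    have hind : IndepFun I (fun ω => ∑ j ∈ Finset.Icc 1 k, X j ω) P := by
      have := (hindep.indepFun_finsetSum_of_notMem hZm (s := Finset.Icc 1 k) (i := 0)
        (by simp)).symm
      rw [if_pos rfl] at this
      convert this using 1
      ext ω
      rw [Finset.sum_apply]
      refine Finset.sum_congr rfl fun j hj => ?_
      have : j ≠ 0 := by have := Finset.mem_Icc.1 hj; omega
      simp [this]
    have h2 := hind.integral_fun_comp_mul_comp (𝕜 := ℂ)
      (f := ({k} : Set ℕ).indicator (fun _ => (1:ℂ)))
      (g := fun i : ℕ => Complex.exp (s * (i:ℝ) * Complex.I)) hI.aemeasurable (by fun_prop)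
      (by fun_prop) (by fun_prop)
    rw [hS k] at h2
    have h3 : ∫ ω, ({k} : Set ℕ).indicator (fun _ => (1:ℂ)) (I ω) ∂P = a ^ k * (1 - a) := by
      have : (fun ω => ({k} : Set ℕ).indicator (fun _ => (1:ℂ)) (I ω))
          = (I ⁻¹' {k}).indicator (fun _ => (1:ℂ)) := rfl
      rw [this, integral_indicator (hset k), setIntegral_const]
      have h4 : P.real (I ⁻¹' {k}) = a ^ k * (1 - a) := hIlaw k
      rw [h4]
      simp
    rw [h3] at h2
    rw [← integral_indicator (hset k), show (1 - (a:ℂ)) * (a * g) ^ k = a ^ k * (1 - a) * g ^ k by ring,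
      ← h2]
    congr 1
    ext ω
    by_cases h : I ω = k
    · simp [Set.indicator, h]
    · simp [Set.indicator, h]
  simp_rw [hterm]
  rw [tsum_mul_left, tsum_geometric_of_norm_lt_one]
  · rw [div_eq_mul_inv]
  · rw [norm_mul, Complex.norm_real, Real.norm_of_nonneg ha.1.le]
    nlinarith [norm_nonneg g]

/-- light-tail limit of geometric sums: `Y^n / n` converges in
distribution to an exponential random variable with rate `λ/m`. -/
theorem geometric_sum_light_tail_limit
    {Ω : Type*} [MeasurableSpace Ω] (P : Measure Ω) [IsProbabilityMeasure P]
    (φ : ℕ → ℝ) (hφnn : ∀ i, 0 ≤ φ i) (hφ0 : φ 0 = 0) (hφsum : ∑' i : ℕ, φ i = 1)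
    (m : ℝ) (hm : HasSum (fun i : ℕ => (i : ℝ) * φ i) m)
    (a : ℕ → ℝ) (ha : ∀ n, 1 ≤ n → 0 < a n ∧ a n < 1)
    (lam : ℝ) (hlam : 0 < lam)
    (haconv : Tendsto (fun n : ℕ => (n : ℝ) * (1 - a n)) atTop (nhds lam))
    (I : ℕ → Ω → ℕ) (X : ℕ → Ω → ℕ)
    (hImeas : ∀ n, Measurable (I n)) (hXmeas : ∀ j, Measurable (X j))
    -- for each `n`, `I^n` is geometric with parameter `1 - a_n`
    (hIlaw : ∀ n, 1 ≤ n → ∀ i : ℕ, (P {ω | I n ω = i}).toReal = a n ^ i * (1 - a n))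
    -- the `X^j` are positive-integer valued, iid with `P[X^1 = i] = φ_i`
    (hXpos : ∀ j ω, 1 ≤ X j ω)
    (hXlaw : ∀ i : ℕ, 1 ≤ i → (P {ω | X 1 ω = i}).toReal = φ i)
    (hXid : ∀ j, 1 ≤ j → Measure.map (X j) P = Measure.map (X 1) P)
    -- for each `n`, the family `I^n, X^1, X^2, …` is mutually independent
    (hindep : ∀ n, iIndepFun
      (fun j : ℕ => if j = 0 then I n else X j) P)
    (Y : ℕ → Ω → ℕ) (hY : ∀ n ω, Y n ω = ∑ j ∈ Finset.Icc 1 (I n ω), X j ω) :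
    ∀ f : BoundedContinuousFunction ℝ ℝ,
      Tendsto (fun n : ℕ => ∫ ω, f ((Y n ω : ℝ) / n) ∂P) atTop
        (nhds (∫ x in Set.Ici (0:ℝ), f x * (lam / m * Real.exp (-(lam / m) * x)))) := by
  intro f
  have hφs : HasSum φ 1 := by
    have : Summable φ := by
      by_contra h
      rw [tsum_eq_zero_of_not_summable h] at hφsum
      norm_num at hφsum
    rw [← hφsum]
    exact this.hasSum
  have hm1 : 1 ≤ m := by
    refine hasSum_le (fun i => ?_) hφs hm
    rcases Nat.eq_zero_or_pos i with rfl | hi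
    · simp [hφ0]
    · have : (1:ℝ) ≤ i := by exact_mod_cast hi
      nlinarith [hφnn i]
  have hm0 : 0 < m := by linarith
  have hr : 0 < lam / m := by positivity
  have hYm : ∀ n, Measurable (Y n) := by
    intro n
    have h : Measurable (fun p : ℕ × Ω => ∑ j ∈ Finset.Icc 1 p.1, X j p.2) :=
      measurable_from_prod_countable_right fun k =>
        Finset.measurable_fun_sum (Finset.Icc 1 k) fun j _ => hXmeas j
    have h2 : Y n = fun ω => ∑ j ∈ Finset.Icc 1 (I n ω), X j ω := funext (hY n)
    rw [h2]
    exact h.comp ((hImeas n).prodMk measurable_id)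
  have hYn : ∀ n : ℕ, Measurable (fun ω => (Y n ω : ℝ) / n) := fun n =>
    (measurable_from_nat.comp (hYm n)).div_const _
  let μ : ℕ → ProbabilityMeasure ℝ := fun n =>
    ⟨P.map (fun ω => (Y n ω : ℝ) / n), Measure.isProbabilityMeasure_map (hYn n).aemeasurable⟩
  let μ₀ : ProbabilityMeasure ℝ := ⟨expMeasure (lam / m), isProbabilityMeasure_expMeasure hr⟩
  have key : Tendsto μ atTop (nhds μ₀) := by
    refine ProbabilityMeasure.tendsto_of_tendsto_charFun fun t => ?_
    change Tendsto (fun n => charFun (P.map (fun ω => (Y n ω : ℝ) / n)) t) atTop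
      (nhds (charFun (expMeasure (lam / m)) t))
    rw [aux_exp_charFun _ hr]
    set g := charFun (P.map (fun ω => (X 1 ω : ℝ))) with hg
    have hgd : HasDerivAt g (m * Complex.I) 0 :=
      aux_deriv P φ hφnn m hm (X 1) (hXmeas 1) hXlaw
    have hX1 : Measurable (fun ω => (X 1 ω : ℝ)) := measurable_from_nat.comp (hXmeas 1)
    have : IsProbabilityMeasure (P.map (fun ω => (X 1 ω : ℝ))) :=
      Measure.isProbabilityMeasure_map hX1.aemeasurable
    have hg0 : g 0 = 1 := by simp [hg]
    have hlimg : Tendsto (fun n : ℕ => (n : ℂ) * (g (t / n) - 1)) atTop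
        (nhds (t * (m * Complex.I))) := by
      have hgd' : HasDerivAt g (m * Complex.I) (0 * t) := by simpa using hgd
      have hc : HasDerivAt (fun x : ℝ => g (x * t)) (t • (m * Complex.I)) 0 :=
        HasDerivAt.scomp (h := fun x : ℝ => x * t) (h' := t) (0:ℝ) hgd'
          (by simpa using (hasDerivAt_id (0:ℝ)).mul_const t)
      have h1 := hc.tendsto_slope_zero
      have h2 : Tendsto (fun n : ℕ => ((n : ℝ))⁻¹) atTop (nhdsWithin 0 {0}ᶜ) := by
        refine tendsto_nhdsWithin_iff.2 ⟨tendsto_inv_atTop_nhds_zero_nat, ?_⟩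
        filter_upwards [eventually_gt_atTop 0] with n hn
        have : (n:ℝ) ≠ 0 := by exact_mod_cast hn.ne'
        simpa using this
      have h3 := h1.comp h2
      rw [Complex.real_smul] at h3
      refine h3.congr fun n => ?_
      simp [hg0, div_eq_inv_mul]
    have hlama : Tendsto (fun n : ℕ => (n : ℂ) * (1 - a n)) atTop (nhds (lam : ℂ)) := by
      have := (Complex.continuous_ofReal.tendsto lam).comp haconv
      refine this.congr fun n => ?_
      simp
    have ha1 : Tendsto (fun n : ℕ => (a n : ℂ)) atTop (nhds 1) := by
      have h1 := hlama.mul (tendsto_inv_atTop_nhds_zero_nat (𝕜 := ℂ))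
      have h2 := (tendsto_const_nhds (x := (1:ℂ))).sub h1
      simp only [mul_zero, sub_zero] at h2
      refine h2.congr' ?_
      filter_upwards [eventually_gt_atTop 0] with n hn
      have : (n:ℂ) ≠ 0 := by exact_mod_cast hn.ne'
      field_simp
      ring
    have hden := hlama.sub (ha1.mul hlimg)
    have hne : (lam : ℂ) - 1 * (t * (m * Complex.I)) ≠ 0 := by
      intro h
      have := congrArg Complex.re h
      simp at this
      exact hlam.ne' this
    have hfin := hlama.div hden hne
    have hmC : (m:ℂ) ≠ 0 := by exact_mod_cast hm0.ne'
    have hlimeq : (lam : ℂ) / (lam - 1 * (t * (m * Complex.I)))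
        = ((lam / m : ℝ) : ℂ) / (((lam / m : ℝ) : ℂ) - t * Complex.I) := by
      push_cast
      have : (lam:ℂ) / m - t * Complex.I = (lam - 1 * (t * (m * Complex.I))) / m := by
        field_simp
      rw [this, div_div_div_cancel_right₀ hmC]
    rw [← hlimeq]
    refine hfin.congr' ?_
    filter_upwards [eventually_ge_atTop 1] with n hn
    have hn0 : (n:ℂ) ≠ 0 := by
      have : n ≠ 0 := by omega
      exact_mod_cast this
    have hcf := aux_charFun P (a n) (ha n hn) (I n) X (hImeas n) hXmeas (hIlaw n hn) hXid
      (hindep n) (t / n)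
    rw [charFun_apply_real, integral_map (hYn n).aemeasurable (by fun_prop)]
    have h5 : ∀ ω, Complex.exp (t * ((Y n ω / n : ℝ) : ℂ) * Complex.I) = Complex.exp
        (((t / n : ℝ) : ℂ) * ((∑ j ∈ Finset.Icc 1 (I n ω), X j ω : ℕ) : ℝ) * Complex.I) := by
      intro ω
      rw [← hY n ω]
      congr 1
      push_cast
      ring
    simp_rw [h5]
    rw [hcf, ← hg, ← mul_div_mul_left _ _ hn0]
    simp only [Pi.div_apply]
    congr 1
    ring
  have h1 := (ProbabilityMeasure.tendsto_iff_forall_integral_tendsto.1 key) f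
  have h2 : ∫ x, f x ∂(μ₀ : Measure ℝ)
      = ∫ x in Set.Ici (0:ℝ), f x * (lam / m * Real.exp (-(lam / m) * x)) := by
    change ∫ x, f x ∂(expMeasure (lam / m)) = _
    rw [aux_exp_integral _ hr]
    simp only [smul_eq_mul, mul_comm]
  rw [h2] at h1
  refine h1.congr fun n => ?_
  change ∫ x, f x ∂(P.map (fun ω => (Y n ω : ℝ) / n)) = _
  rw [integral_map (hYn n).aemeasurable (by fun_prop)]
end

section
/- (Covariance formula for the AR process.) Let φ : ℕ → ℝ with φ_i ≥ 0, φ_0 = 0, ∑_{i=1}^∞ φ_i = 1, let a ∈ (0,1), and let (ε_k)_{k≥0} be independent real random variables with E[ε_k] = 0 and E[ε_k^2] = 1 for all k. Define y_0 = ε_0 and y_k = ε_k + ∑_{i=1}^k a φ_i y_{k−i} for k ≥ 1. Then for all k ≥ k' ≥ 0, E[y_k y_{k'}] = ∑_{j=0}^{k'} ψ^a_{k−j} ψ^a_{k'−j}. -/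
open MeasureTheory ProbabilityTheory Filter Set

theorem convPow_eq_zero (φ : ℕ → ℝ) (hφ0 : φ 0 = 0) (l : ℕ) :
    ∀ i, i < l → convPow φ l i = 0 := by
  induction l with
  | zero => intro i hi; omega
  | succ l ih =>
    intro i hi
    simp only [convPow]
    refine Finset.sum_eq_zero fun j hj => ?_
    rw [Finset.mem_range] at hj
    by_cases h : j < l
    · rw [ih j h, zero_mul]
    · have : i - j = 0 := by omega
      rw [this, hφ0, mul_zero]

theorem psi_summable (a : ℝ) (φ : ℕ → ℝ) (hφ0 : φ 0 = 0) (i : ℕ) :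
    Summable (fun l : ℕ => a ^ l * convPow φ l i) := by
  refine summable_of_ne_finset_zero (s := Finset.range (i + 1)) fun l hl => ?_
  rw [Finset.mem_range] at hl
  rw [convPow_eq_zero φ hφ0 l i (by omega), mul_zero]

theorem psi_rec (a : ℝ) (φ : ℕ → ℝ) (hφ0 : φ 0 = 0) (n : ℕ) :
    psiSeq a φ n = (if n = 0 then 1 else 0)
      + ∑ i ∈ Finset.range (n + 1), a * φ i * psiSeq a φ (n - i) := by
  have h1 : psiSeq a φ n = (if n = 0 then 1 else 0)
      + ∑' l : ℕ, a ^ (l + 1) * convPow φ (l + 1) n := by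
    unfold psiSeq
    rw [(psi_summable a φ hφ0 n).tsum_eq_zero_add]
    simp [convPow]
  rw [h1]
  congr 1
  have h2 : ∀ l : ℕ, a ^ (l + 1) * convPow φ (l + 1) n =
      ∑ j ∈ Finset.range (n + 1), (a * φ (n - j)) * (a ^ l * convPow φ l j) := by
    intro l
    simp only [convPow]
    rw [Finset.mul_sum]
    refine Finset.sum_congr rfl fun j _ => ?_
    ring
  simp_rw [h2]
  rw [Summable.tsum_finsetSum (fun j _ => (psi_summable a φ hφ0 j).mul_left _)]
  simp_rw [tsum_mul_left]
  rw [← Finset.sum_range_reflect]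
  refine Finset.sum_congr rfl fun j hj => ?_
  rw [Finset.mem_range] at hj
  have e1 : n + 1 - 1 - j = n - j := by omega
  have e2 : n - (n - j) = j := by omega
  rw [e1, e2]
  rfl

theorem y_eq {Ω : Type*} (φ : ℕ → ℝ) (hφ0 : φ 0 = 0) (a : ℝ)
    (ε : ℕ → Ω → ℝ) (y : ℕ → Ω → ℝ) (hy0 : y 0 = ε 0)
    (hyrec : ∀ k, 1 ≤ k → ∀ ω,
      y k ω = ε k ω + ∑ i ∈ Finset.Icc 1 k, a * φ i * y (k - i) ω) (ω : Ω) (k : ℕ) :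
    y k ω = ∑ j ∈ Finset.range (k + 1), psiSeq a φ (k - j) * ε j ω := by
  induction k using Nat.strong_induction_on with
  | _ k ih =>
    have hR : ∑ j ∈ Finset.range (k + 1), psiSeq a φ (k - j) * ε j ω
        = ε k ω + ∑ i ∈ Finset.range (k + 1), ∑ j ∈ Finset.range (k - i + 1),
            a * φ i * (psiSeq a φ (k - i - j) * ε j ω) := by
      rw [Finset.sum_comm' (t' := Finset.range (k + 1))
        (s' := fun j => Finset.range (k - j + 1))
        (by intro x z; simp only [Finset.mem_range]; omega)]
      have : ε k ω = ∑ j ∈ Finset.range (k + 1), (if k - j = 0 then 1 else 0) * ε j ω := by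
        rw [Finset.sum_eq_single k]
        · simp
        · intro b hb hbk
          rw [Finset.mem_range] at hb
          rw [if_neg (by omega), zero_mul]
        · simp
      rw [this, ← Finset.sum_add_distrib]
      refine Finset.sum_congr rfl fun j _ => ?_
      rw [psi_rec a φ hφ0 (k - j), add_mul, Finset.sum_mul]
      congr 1
      refine Finset.sum_congr rfl fun i _ => ?_
      rw [Nat.sub_right_comm k j i]
      ring
    rw [hR]
    have hY : y k ω = ε k ω + ∑ i ∈ Finset.Icc 1 k, a * φ i * y (k - i) ω := by
      rcases Nat.eq_zero_or_pos k with h | h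
      · subst h; simp [hy0]
      · exact hyrec k h ω
    rw [hY]
    congr 1
    rw [← Finset.sum_subset (s₁ := Finset.Icc 1 k) (s₂ := Finset.range (k + 1))]
    · refine Finset.sum_congr rfl fun i hi => ?_
      rw [Finset.mem_Icc] at hi
      rw [ih (k - i) (by omega), Finset.mul_sum]
    · intro x hx
      simp only [Finset.mem_Icc, Finset.mem_range] at *
      omega
    · intro x hx hx2
      simp only [Finset.mem_Icc, Finset.mem_range] at *
      have : x = 0 := by omega
      subst this
      simp [hφ0]

/-- covariance formula for the AR(∞) process:
`E[y_k y_{k'}] = ∑_{j=0}^{k'} ψ^a_{k-j} ψ^a_{k'-j}` for `k ≥ k'`. -/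
theorem ar_covariance
    {Ω : Type*} [MeasurableSpace Ω] (P : Measure Ω) [IsProbabilityMeasure P]
    (φ : ℕ → ℝ) (hφnn : ∀ i, 0 ≤ φ i) (hφ0 : φ 0 = 0) (hφsum : ∑' i : ℕ, φ i = 1)
    (a : ℝ) (ha0 : 0 < a) (ha1 : a < 1)
    (ε : ℕ → Ω → ℝ) (hεmeas : ∀ k, Measurable (ε k))
    -- the `ε_k` are independent, square integrable, centered with unit variance
    (hεindep : iIndepFun ε P)
    (hεL2 : ∀ k, MemLp (ε k) 2 P)
    (hεmean : ∀ k, ∫ ω, ε k ω ∂P = 0)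
    (hεvar : ∀ k, ∫ ω, (ε k ω) ^ 2 ∂P = 1)
    (y : ℕ → Ω → ℝ)
    (hy0 : y 0 = ε 0)
    (hyrec : ∀ k, 1 ≤ k → ∀ ω,
      y k ω = ε k ω + ∑ i ∈ Finset.Icc 1 k, a * φ i * y (k - i) ω) :
    ∀ k k' : ℕ, k' ≤ k →
      ∫ ω, y k ω * y k' ω ∂P =
        ∑ j ∈ Finset.range (k' + 1), psiSeq a φ (k - j) * psiSeq a φ (k' - j) := by
  intro k k' hk
  have hy := y_eq φ hφ0 a ε y hy0 hyrec
  have hint : ∀ i j, Integrable (fun ω => ε i ω * ε j ω) P := fun i j =>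
    (hεL2 i).integrable_mul (hεL2 j)
  have hcov : ∀ i j, ∫ ω, ε i ω * ε j ω ∂P = if i = j then 1 else 0 := by
    intro i j
    split_ifs with h
    · subst h
      rw [← hεvar i]
      simp_rw [sq]
    · have := (hεindep.indepFun h).integral_fun_mul_eq_mul_integral
        (hεmeas i).aestronglyMeasurable (hεmeas j).aestronglyMeasurable
      rw [this, hεmean i, zero_mul]
  have e : ∀ ω, y k ω * y k' ω = ∑ i ∈ Finset.range (k + 1), ∑ j ∈ Finset.range (k' + 1),
      (psiSeq a φ (k - i) * psiSeq a φ (k' - j)) * (ε i ω * ε j ω) := by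
    intro ω
    rw [hy ω k, hy ω k', Finset.sum_mul_sum]
    refine Finset.sum_congr rfl fun i _ => Finset.sum_congr rfl fun j _ => ?_
    ring
  simp_rw [e]
  rw [integral_finsetSum _ (fun i _ => integrable_finsetSum _ (fun j _ => (hint i j).const_mul _))]
  simp_rw [integral_finsetSum _ (fun j _ => (hint _ j).const_mul _), integral_const_mul, hcov]
  rw [Finset.sum_comm]
  refine Finset.sum_congr rfl fun j hj => ?_
  rw [Finset.mem_range] at hj
  rw [Finset.sum_eq_single j]
  · simp
  · intro b _ hb
    simp [hb]
  · intro h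
    rw [Finset.mem_range] at h
    omega
end

section
/- Let φ : ℕ → ℝ with φ_i ≥ 0, φ_0 = 0 and ∑_{i=1}^∞ φ_i = 1, and let φ̂(z) = ∑_{k=0}^∞ φ_k e^{−2πikz} for z ∈ ℝ be its Fourier transform. Then for every a ∈ [1/2, 1) and every z ∈ ℝ, |1 − a φ̂(z)|² ≥ (1−a)² + |1 − φ̂(z)|²/4. -/
open MeasureTheory ProbabilityTheory Filter Set

/-- for `a ∈ [1/2, 1)` and every `z`,
`|1 − a φ̂(z)|² ≥ (1−a)² + |1 − φ̂(z)|²/4`. -/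
theorem fourier_modulus_lower_bound
    (φ : ℕ → ℝ) (hφnn : ∀ i, 0 ≤ φ i) (hφ0 : φ 0 = 0) (hφsum : ∑' i : ℕ, φ i = 1) :
    ∀ a : ℝ, 1 / 2 ≤ a → a < 1 → ∀ z : ℝ,
      (1 - a) ^ 2 + ‖1 - fourierSeq φ z‖ ^ 2 / 4 ≤
        ‖1 - (a : ℂ) * fourierSeq φ z‖ ^ 2 := by
  intro a ha ha1 z
  have hs : Summable φ := by
    by_contra h
    rw [tsum_eq_zero_of_not_summable h] at hφsum
    exact zero_ne_one hφsum
  have hterm : ∀ k : ℕ,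
      ‖(φ k : ℂ) * Complex.exp (-(2 * Real.pi * Complex.I * k * z))‖ = φ k := by
    intro k
    have h1 : (-(2 * Real.pi * Complex.I * k * z) : ℂ)
        = ((-(2 * Real.pi * k * z) : ℝ) : ℂ) * Complex.I := by
      push_cast; ring
    rw [norm_mul, h1, Complex.norm_exp_ofReal_mul_I, mul_one, Complex.norm_real,
      Real.norm_of_nonneg (hφnn k)]
  have hw : ‖fourierSeq φ z‖ ≤ 1 := by
    unfold fourierSeq
    refine (norm_tsum_le_tsum_norm ?_).trans ?_
    · simpa only [hterm] using hs
    · simp only [hterm, hφsum, le_refl]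
  have hre : (fourierSeq φ z).re ≤ 1 := (Complex.re_le_norm _).trans hw
  generalize fourierSeq φ z = w at hre
  rw [← Complex.normSq_eq_norm_sq, ← Complex.normSq_eq_norm_sq, Complex.normSq_apply,
    Complex.normSq_apply]
  simp only [Complex.sub_re, Complex.sub_im, Complex.one_re, Complex.one_im, Complex.mul_re,
    Complex.mul_im, Complex.ofReal_re, Complex.ofReal_im]
  have h1 : 0 ≤ a * (1 - a) * (1 - w.re) :=
    mul_nonneg (mul_nonneg (by linarith) (by linarith)) (by linarith)
  have h2 : 0 ≤ (a ^ 2 - 1 / 4) * ((1 - w.re) ^ 2 + w.im ^ 2) :=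
    mul_nonneg (by nlinarith) (by positivity)
  nlinarith [h1, h2]
end

section
/- (Bound on E[y^n_k y^n_{k'}], light-tail case.) Let φ : ℕ → ℝ with φ_i ≥ 0, φ_0 = 0, ∑_{i=1}^∞ φ_i = 1, and assume m := ∑_{i=1}^∞ i φ_i < ∞. Let (a_n)_{n≥1} satisfy 0 < a_n < 1 and n(1−a_n) → λ for some λ > 0. Let (ε_k)_{k≥0} be iid real random variables with E[ε_0] = 0 and E[ε_0²] = 1, and for each n define y^n_0 = ε_0 and y^n_k = ε_k + ∑_{i=1}^k a_n φ_i y^n_{k−i} for k ≥ 1. Then there exists c > 0 such that for every n ≥ 1 and all k, k' ≥ 0, E[y^n_k y^n_{k'}] ≤ c/(1−a_n). -/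
open MeasureTheory ProbabilityTheory Filter Set

open PowerSeries in
theorem psi_exists (a : ℝ) (ha0 : 0 < a) (ha1 : a < 1) (φ : ℕ → ℝ) (hφnn : ∀ i, 0 ≤ φ i)
    (hφ0 : φ 0 = 0) (hφs : ∀ n, ∑ i ∈ Finset.range n, φ i ≤ 1) :
    ∃ ψ : ℕ → ℝ, (∀ k, 0 ≤ ψ k) ∧ (∀ k, ψ k ≤ 1) ∧
      (∀ N, ∑ k ∈ Finset.range N, ψ k ≤ 1 / (1 - a)) ∧
      ∀ e y : ℕ → ℝ, y 0 = e 0 →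
        (∀ k, 1 ≤ k → y k = e k + ∑ i ∈ Finset.Icc 1 k, a * φ i * y (k - i)) →
        ∀ k, y k = ∑ j ∈ Finset.range (k + 1), ψ (k - j) * e j := by
  let Φ : PowerSeries ℝ := PowerSeries.mk (fun i => a * φ i)
  let Ψ : PowerSeries ℝ := (1 - Φ)⁻¹
  have hinv : (1 - Φ) * Ψ = 1 := by
    apply PowerSeries.mul_inv_cancel
    rw [← PowerSeries.coeff_zero_eq_constantCoeff_apply, map_sub, PowerSeries.coeff_mk, hφ0,
      PowerSeries.coeff_zero_one]
    norm_num
  let ψ : ℕ → ℝ := fun k => PowerSeries.coeff k Ψ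
  have hrec : ∀ k, ψ k = (if k = 0 then 1 else 0)
      + ∑ j ∈ Finset.range (k + 1), ψ j * (a * φ (k - j)) := by
    intro k
    have h1 : Ψ = 1 + Ψ * Φ := by linear_combination hinv
    have h2 := congrArg (PowerSeries.coeff k) h1
    rw [map_add, PowerSeries.coeff_mul, Finset.Nat.sum_antidiagonal_eq_sum_range_succ_mk,
      PowerSeries.coeff_one] at h2
    simpa [Φ, ψ] using h2
  have hrec' : ∀ k, ψ k = (if k = 0 then 1 else 0)
      + ∑ j ∈ Finset.range k, ψ j * (a * φ (k - j)) := by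
    intro k
    have h := hrec k
    rw [Finset.sum_range_succ] at h
    simpa [hφ0] using h
  have hb : ∀ k, 0 ≤ ψ k ∧ ψ k ≤ 1 := by
    intro k
    induction k using Nat.strong_induction_on with
    | _ k ih =>
      rw [hrec' k]
      rcases Nat.eq_zero_or_pos k with rfl | hk
      · simp
      · rw [if_neg hk.ne', zero_add]
        constructor
        · exact Finset.sum_nonneg fun j hj => mul_nonneg (ih j (Finset.mem_range.1 hj)).1
            (mul_nonneg ha0.le (hφnn _))
        · calc ∑ j ∈ Finset.range k, ψ j * (a * φ (k - j))
              ≤ ∑ j ∈ Finset.range k, φ (k - j) := by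
                refine Finset.sum_le_sum fun j hj => ?_
                have h := ih j (Finset.mem_range.1 hj)
                have h3 : ψ j * a ≤ 1 := by nlinarith
                have := mul_le_mul_of_nonneg_right h3 (hφnn (k - j))
                linarith
            _ ≤ ∑ j ∈ Finset.range (k + 1), φ (k - j) :=
                Finset.sum_le_sum_of_subset_of_nonneg (by simp) (fun _ _ _ => hφnn _)
            _ = ∑ j ∈ Finset.range (k + 1), φ j := by
                rw [← Finset.sum_range_reflect φ (k + 1)]
                simp
            _ ≤ 1 := hφs _
  refine ⟨ψ, fun k => (hb k).1, fun k => (hb k).2, ?_, ?_⟩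
  · intro N
    have h1 : ∑ k ∈ Finset.range N, ψ k ≤ 1 + a * ∑ k ∈ Finset.range N, ψ k := by
      calc ∑ k ∈ Finset.range N, ψ k
          = ∑ k ∈ Finset.range N, (if k = 0 then (1:ℝ) else 0) +
            ∑ k ∈ Finset.range N, ∑ j ∈ Finset.range (k + 1), ψ j * (a * φ (k - j)) := by
            rw [← Finset.sum_add_distrib]
            exact Finset.sum_congr rfl fun k _ => hrec k
        _ ≤ 1 + a * ∑ k ∈ Finset.range N, ψ k := by
            rw [Finset.sum_range_diag_flip N (fun j i => ψ j * (a * φ i))]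
            apply add_le_add
            · rw [Finset.sum_ite_eq']
              split_ifs <;> norm_num
            · rw [Finset.mul_sum]
              refine Finset.sum_le_sum fun j _ => ?_
              rw [← Finset.mul_sum, ← Finset.mul_sum]
              have := mul_le_mul_of_nonneg_left (hφs (N - j)) (mul_nonneg ha0.le (hb j).1)
              linarith
    rw [le_div_iff₀ (by linarith)]
    linarith
  · intro e y h0 hk k
    have hY : PowerSeries.mk y = PowerSeries.mk e + Φ * PowerSeries.mk y := by
      ext k
      rw [map_add, PowerSeries.coeff_mul, Finset.Nat.sum_antidiagonal_eq_sum_range_succ_mk]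
      simp only [PowerSeries.coeff_mk, Φ]
      rcases Nat.eq_zero_or_pos k with rfl | hkp
      · simp [hφ0, h0]
      · rw [hk k hkp, Finset.range_eq_Ico, Finset.sum_eq_sum_Ico_succ_bot (by omega), hφ0]
        simp only [mul_zero, zero_mul, zero_add]
        rfl
    have hY2 : PowerSeries.mk y = PowerSeries.mk e * Ψ := by
      linear_combination Ψ * hY - PowerSeries.mk y * hinv
    have h2 := congrArg (PowerSeries.coeff k) hY2
    rw [PowerSeries.coeff_mul, Finset.Nat.sum_antidiagonal_eq_sum_range_succ_mk] at h2
    simp only [PowerSeries.coeff_mk] at h2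
    rw [h2]
    exact Finset.sum_congr rfl fun j _ => mul_comm _ _

/-- light-tail bound `E[y^n_k y^n_{k'}] ≤ c/(1−a_n)`. -/
theorem ar_covariance_bound_light_tail
    {Ω : Type*} [MeasurableSpace Ω] (P : Measure Ω) [IsProbabilityMeasure P]
    (φ : ℕ → ℝ) (hφnn : ∀ i, 0 ≤ φ i) (hφ0 : φ 0 = 0) (hφsum : ∑' i : ℕ, φ i = 1)
    (m : ℝ) (hm : HasSum (fun i : ℕ => (i : ℝ) * φ i) m)
    (a : ℕ → ℝ) (ha : ∀ n, 1 ≤ n → 0 < a n ∧ a n < 1)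
    (lam : ℝ) (hlam : 0 < lam)
    (haconv : Tendsto (fun n : ℕ => (n : ℝ) * (1 - a n)) atTop (nhds lam))
    -- the `ε_k` are iid, square integrable, centered with unit variance
    (ε : ℕ → Ω → ℝ) (hεmeas : ∀ k, Measurable (ε k))
    (hεindep : iIndepFun ε P)
    (hεid : ∀ k, Measure.map (ε k) P = Measure.map (ε 0) P)
    (hεL2 : MemLp (ε 0) 2 P)
    (hεmean : ∫ ω, ε 0 ω ∂P = 0)
    (hεvar : ∫ ω, (ε 0 ω) ^ 2 ∂P = 1)
    (y : ℕ → ℕ → Ω → ℝ)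
    (hy0 : ∀ n, y n 0 = ε 0)
    (hyrec : ∀ n k, 1 ≤ k → ∀ ω,
      y n k ω = ε k ω + ∑ i ∈ Finset.Icc 1 k, a n * φ i * y n (k - i) ω) :
    ∃ c > 0, ∀ n, 1 ≤ n → ∀ k k' : ℕ,
      ∫ ω, y n k ω * y n k' ω ∂P ≤ c / (1 - a n) := by
  have hsummable : Summable φ := by
    by_contra h
    rw [tsum_eq_zero_of_not_summable h] at hφsum
    norm_num at hφsum
  have hφs : ∀ n, ∑ i ∈ Finset.range n, φ i ≤ 1 := fun n => by
    rw [← hφsum]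
    exact hsummable.sum_le_tsum _ fun i _ => hφnn i
  have hid : ∀ k, IdentDistrib (ε k) (ε 0) P P := fun k =>
    ⟨(hεmeas k).aemeasurable, (hεmeas 0).aemeasurable, hεid k⟩
  have hL2 : ∀ k, MemLp (ε k) 2 P := fun k => (hid k).memLp_iff.2 hεL2
  have hint : ∀ i j, Integrable (fun ω => ε i ω * ε j ω) P := fun i j =>
    (hL2 i).integrable_mul (hL2 j)
  have hcov : ∀ i j, ∫ ω, ε i ω * ε j ω ∂P = if i = j then 1 else 0 := by
    intro i j
    split_ifs with hij
    · subst hij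
      rw [← hεvar]
      have := ((hid i).comp (measurable_id.pow_const 2)).integral_eq
      simpa [Function.comp_def, pow_two] using this
    · rw [(hεindep.indepFun hij).integral_fun_mul_eq_mul_integral
        (hεmeas i).aestronglyMeasurable (hεmeas j).aestronglyMeasurable,
        (hid i).integral_eq, hεmean, zero_mul]
  refine ⟨1, one_pos, fun n hn k k' => ?_⟩
  obtain ⟨ψ, hψ0, hψ1, hψs, hψ⟩ := psi_exists (a n) (ha n hn).1 (ha n hn).2 φ hφnn hφ0 hφs
  have hy : ∀ k ω, y n k ω = ∑ j ∈ Finset.range (k + 1), ψ (k - j) * ε j ω := fun k ω =>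
    hψ (fun j => ε j ω) (fun j => y n j ω) (by simp [hy0]) (fun k hk => hyrec n k hk ω) k
  have hprod : ∀ ω, y n k ω * y n k' ω = ∑ i ∈ Finset.range (k + 1),
      ∑ j ∈ Finset.range (k' + 1), (ψ (k - i) * ψ (k' - j)) * (ε i ω * ε j ω) := by
    intro ω
    rw [hy, hy, Finset.sum_mul_sum]
    exact Finset.sum_congr rfl fun i _ => Finset.sum_congr rfl fun j _ => by ring
  simp_rw [hprod]
  rw [integral_finsetSum _ fun i _ => integrable_finsetSum _ fun j _ => (hint i j).const_mul _]
  refine le_trans ?_ (hψs (k + 1))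
  rw [← Finset.sum_range_reflect ψ (k + 1)]
  refine Finset.sum_le_sum fun i _ => ?_
  rw [integral_finsetSum _ fun j _ => (hint i j).const_mul _]
  simp_rw [integral_const_mul, hcov, mul_ite, mul_one, mul_zero]
  rw [Finset.sum_ite_eq]
  have e1 : k + 1 - 1 - i = k - i := by omega
  rw [e1]
  split_ifs
  · exact mul_le_of_le_one_right (hψ0 _) (hψ1 _)
  · exact hψ0 _
end

section
/- (Bound on E[y^n_k y^n_{k'}], critical case α = 1/2.) Let φ : ℕ → ℝ with φ_i ≥ 0, φ_0 = 0, ∑_{i=1}^∞ φ_i = 1, and assume there exists K > 0 such that N^{1/2} ∑_{i=N}^∞ φ_i → K as N → ∞. Set δ = K Γ(1/2)/(1/2), and let (a_n)_{n≥1} satisfy 0 < a_n < 1 and n^{1/2}(1−a_n) → λδ for some λ > 0. Let (ε_k)_{k≥0} be iid real random variables with E[ε_0] = 0 and E[ε_0²] = 1, and for each n define y^n_0 = ε_0 and y^n_k = ε_k + ∑_{i=1}^k a_n φ_i y^n_{k−i} for k ≥ 1. Then for every ε ∈ (0,1) there exists c > 0 such that for every n ≥ 1 and all k, k' ≥ 0: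 if k = k' then E[(y^n_k)²] ≤ c (1−a_n)^{−ε}, and if k ≠ k' then E[y^n_k y^n_{k'}] ≤ c + c ((1−a_n)² |k−k'|)^{−ε}. -/
open MeasureTheory ProbabilityTheory Filter Set

/-- convolution powers, as coefficients of powers of a power series -/
noncomputable def uu (φ : ℕ → ℝ) (l x : ℕ) : ℝ :=
  PowerSeries.coeff x (PowerSeries.mk φ ^ l)

lemma uu_zero (φ : ℕ → ℝ) (x : ℕ) : uu φ 0 x = if x = 0 then 1 else 0 := by
  simp [uu, PowerSeries.coeff_one]

lemma uu_one (φ : ℕ → ℝ) (x : ℕ) : uu φ 1 x = φ x := by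
  simp [uu]

lemma uu_add (φ : ℕ → ℝ) (p q x : ℕ) :
    uu φ (p + q) x = ∑ j ∈ Finset.HasAntidiagonal.antidiagonal x, uu φ p j.1 * uu φ q j.2 := by
  simp only [uu, pow_add, PowerSeries.coeff_mul]

lemma uu_succ (φ : ℕ → ℝ) (l x : ℕ) :
    uu φ (l + 1) x = ∑ j ∈ Finset.HasAntidiagonal.antidiagonal x, uu φ l j.1 * φ j.2 := by
  rw [uu_add]; simp only [uu_one]

lemma uu_nonneg {φ : ℕ → ℝ} (h : ∀ i, 0 ≤ φ i) (l : ℕ) : ∀ x, 0 ≤ uu φ l x := by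
  induction l with
  | zero => intro x; rw [uu_zero]; split_ifs <;> norm_num
  | succ l ih =>
    intro x; rw [uu_succ]
    exact Finset.sum_nonneg fun j _ => mul_nonneg (ih _) (h _)

/-- sums over the triangle are bounded by sums over the square -/
lemma sum_antidiag_le (f g : ℕ → ℕ → ℝ) (n : ℕ) (hfg : ∀ i j, f i j ≤ g i j)
    (hg : ∀ i j, 0 ≤ g i j) :
    ∑ k ∈ Finset.range n, ∑ p ∈ Finset.HasAntidiagonal.antidiagonal k, f p.1 p.2 ≤
      ∑ i ∈ Finset.range n, ∑ j ∈ Finset.range n, g i j := by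
  rw [Finset.sum_sigma', ← Finset.sum_product']
  calc ∑ x ∈ (Finset.range n).sigma fun k => Finset.HasAntidiagonal.antidiagonal k, f x.2.1 x.2.2
      ≤ ∑ x ∈ (Finset.range n).sigma fun k => Finset.HasAntidiagonal.antidiagonal k, g x.2.1 x.2.2 :=
        Finset.sum_le_sum fun x _ => hfg _ _
    _ = ∑ x ∈ ((Finset.range n).sigma fun k => Finset.HasAntidiagonal.antidiagonal k).image (fun x => x.2),
          g x.1 x.2 := by
        rw [Finset.sum_image]
        rintro ⟨a, b⟩ hx ⟨c, d⟩ hy h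
        simp only [Finset.coe_sigma, Set.mem_sigma_iff, Finset.mem_coe,
          Finset.HasAntidiagonal.mem_antidiagonal] at hx hy h
        obtain ⟨_, hx⟩ := hx
        obtain ⟨_, hy⟩ := hy
        subst h
        have : a = c := by rw [← hx, ← hy]
        subst this; rfl
    _ ≤ _ := by
        apply Finset.sum_le_sum_of_subset_of_nonneg
        · intro x hx
          simp only [Finset.mem_image, Finset.mem_sigma, Finset.mem_range,
            Finset.HasAntidiagonal.mem_antidiagonal, Finset.mem_product] at hx ⊢
          obtain ⟨y, ⟨h1, h2⟩, rfl⟩ := hx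
          omega
        · intro i _ _; exact hg _ _

lemma uu_sum_le_one {φ : ℕ → ℝ} (h : ∀ i, 0 ≤ φ i)
    (hs : ∀ n, ∑ i ∈ Finset.range n, φ i ≤ 1) (l : ℕ) :
    ∀ n, ∑ j ∈ Finset.range n, uu φ l j ≤ 1 := by
  induction l with
  | zero =>
    intro n
    simp only [uu_zero, Finset.sum_ite_eq', Finset.mem_range]
    split_ifs <;> norm_num
  | succ l ih =>
    intro n
    simp only [uu_succ]
    refine (sum_antidiag_le (fun i j => uu φ l i * φ j) (fun i j => uu φ l i * φ j) n
      (fun _ _ => le_rfl) (fun i j => mul_nonneg (uu_nonneg h l i) (h j))).trans ?_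
    rw [← Finset.sum_mul_sum]
    exact mul_le_one₀ (ih n) (Finset.sum_nonneg fun i _ => h i) (hs n)

/-- subadditive functional along convolution powers -/
lemma uu_sum_subadd {φ : ℕ → ℝ} (h : ∀ i, 0 ≤ φ i)
    (hs : ∀ n, ∑ i ∈ Finset.range n, φ i ≤ 1) (f : ℕ → ℝ) (hf : ∀ i, 0 ≤ f i) (hf0 : f 0 = 0)
    (hsub : ∀ i j, f (i + j) ≤ f i + f j) (A : ℝ)
    (hA : ∀ n, ∑ i ∈ Finset.range n, φ i * f i ≤ A) (l : ℕ) :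
    ∀ n, ∑ j ∈ Finset.range n, uu φ l j * f j ≤ l * A := by
  have hA0 : 0 ≤ A := by simpa using hA 0
  induction l with
  | zero =>
    intro n
    simp [uu_zero, hf0]
  | succ l ih =>
    intro n
    have hu := uu_nonneg h l
    have e1 : ∀ k, uu φ (l+1) k * f k =
        ∑ p ∈ Finset.HasAntidiagonal.antidiagonal k, uu φ l p.1 * φ p.2 * f (p.1 + p.2) := by
      intro k
      rw [uu_succ, Finset.sum_mul]
      refine Finset.sum_congr rfl fun p hp => ?_
      rw [Finset.HasAntidiagonal.mem_antidiagonal.1 hp]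
    simp only [e1]
    refine (sum_antidiag_le (fun i j => uu φ l i * φ j * f (i + j))
      (fun i j => (uu φ l i * f i) * φ j + uu φ l i * (φ j * f j)) n ?_ ?_).trans ?_
    · intro i j
      have := mul_le_mul_of_nonneg_left (hsub i j) (mul_nonneg (hu i) (h j))
      linarith
    · intro i j
      have := hu i; have := h j; have := hf i; have := hf j
      positivity
    · simp only [Finset.sum_add_distrib]
      rw [← Finset.sum_mul_sum, ← Finset.sum_mul_sum]
      have a1 := ih n
      have a2 := hA n
      have a3 := hs n
      have a4 := uu_sum_le_one h hs l n
      have b1 : 0 ≤ ∑ i ∈ Finset.range n, φ i := Finset.sum_nonneg fun i _ => h i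
      have b2 : 0 ≤ ∑ i ∈ Finset.range n, φ i * f i :=
        Finset.sum_nonneg fun i _ => mul_nonneg (h i) (hf i)
      have c1 := mul_le_mul a1 a3 b1 (by positivity)
      have c2 := mul_le_mul a4 a2 b2 (by positivity)
      push_cast
      linarith

lemma sum_inv_sqrt_le (x : ℕ) : ∑ r ∈ Finset.range x, 1 / √((r : ℝ) + 1) ≤ 2 * √x := by
  induction x with
  | zero => simp
  | succ x ih =>
    rw [Finset.sum_range_succ]
    push_cast
    have h1 : 0 < √((x:ℝ) + 1) := by positivity
    have h2 : 0 ≤ √(x:ℝ) := by positivity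
    have h3 : √((x:ℝ) + 1) ^ 2 = x + 1 := Real.sq_sqrt (by positivity)
    have h4 : √(x:ℝ) ^ 2 = x := Real.sq_sqrt (by positivity)
    have : 1 / √((x : ℝ) + 1) ≤ 2 * √((x:ℝ)+1) - 2 * √x := by
      rw [div_le_iff₀ h1]
      nlinarith [sq_nonneg (√((x:ℝ)+1) - √x)]
    linarith

/-- large deviation bound -/
lemma uu_tail {φ : ℕ → ℝ} (h : ∀ i, 0 ≤ φ i)
    (hs : ∀ n, ∑ i ∈ Finset.range n, φ i ≤ 1) (B : ℝ)
    (hB : ∀ r n : ℕ, ∑ i ∈ Finset.Ico (r + 1) n, φ i ≤ B / √((r : ℝ) + 1))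
    (l x n : ℕ) (hx : 1 ≤ x) :
    ∑ j ∈ Finset.Ico x n, uu φ l j ≤ 2 * B * l / √x := by
  have hu := uu_nonneg h l
  have hB0 : 0 ≤ B := by simpa using hB 0 0
  have hx0 : (0:ℝ) < x := by exact_mod_cast hx
  have key := uu_sum_subadd h hs (fun i => ((min i x : ℕ) : ℝ)) (fun i => by positivity) (by simp)
    (by intro i j; exact_mod_cast (by omega)) (2 * B * √x) (by
      intro n
      have e : ∀ i, ((min i x : ℕ) : ℝ) = ∑ r ∈ Finset.range x, if r + 1 ≤ i then 1 else 0 := by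
        intro i
        rw [Finset.sum_ite]
        simp only [Finset.sum_const, nsmul_eq_mul, mul_one, mul_zero, add_zero, Nat.cast_inj]
        have : Finset.filter (fun r => r + 1 ≤ i) (Finset.range x) = Finset.range (min i x) := by
          ext r; simp; omega
        rw [this, Finset.card_range]
      simp only [e, Finset.mul_sum]
      rw [Finset.sum_comm]
      calc _ ≤ ∑ r ∈ Finset.range x, B / √((r : ℝ) + 1) := by
            refine Finset.sum_le_sum fun r _ => ?_
            refine le_trans (le_of_eq ?_) (hB r n)
            simp only [mul_ite, mul_one, mul_zero]
            rw [← Finset.sum_filter]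
            refine Finset.sum_congr ?_ fun _ _ => rfl
            ext i; simp; omega
        _ = B * ∑ r ∈ Finset.range x, 1 / √((r : ℝ) + 1) := by
            rw [Finset.mul_sum]; refine Finset.sum_congr rfl fun r _ => by ring
        _ ≤ B * (2 * √x) := mul_le_mul_of_nonneg_left (sum_inv_sqrt_le x) hB0
        _ = _ := by ring) l n
  have h2 : x * ∑ j ∈ Finset.Ico x n, uu φ l j ≤ l * (2 * B * √x) := by
    refine le_trans ?_ key
    rw [Finset.mul_sum]
    calc _ = ∑ j ∈ Finset.Ico x n, uu φ l j * ((min j x : ℕ) : ℝ) := by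
          refine Finset.sum_congr rfl fun j hj => ?_
          rw [min_eq_right (Finset.mem_Ico.1 hj).1, mul_comm]
      _ ≤ _ := by
          apply Finset.sum_le_sum_of_subset_of_nonneg
          · intro j; simp
          · intro j _ _; have := hu j; positivity
  have h3 : √(x:ℝ) * √x = x := Real.mul_self_sqrt hx0.le
  have h4 : 0 < √(x:ℝ) := by positivity
  rw [le_div_iff₀ h4]
  have : √(x:ℝ) * (√x * ∑ j ∈ Finset.Ico x n, uu φ l j) ≤ √x * (2 * B * l) := by
    rw [← mul_assoc, h3]; linarith
  have := le_of_mul_le_mul_left this h4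
  linarith

/-- pointwise bound from concentration and large deviations -/
lemma uu_pointwise {φ : ℕ → ℝ} (h : ∀ i, 0 ≤ φ i)
    (hs : ∀ n, ∑ i ∈ Finset.range n, φ i ≤ 1) (B : ℝ)
    (hB : ∀ r n : ℕ, ∑ i ∈ Finset.Ico (r + 1) n, φ i ≤ B / √((r : ℝ) + 1))
    (C : ℝ) (hC : ∀ l x, uu φ l x ≤ C / ((l : ℝ) + 1) ^ 2)
    (l x : ℕ) (hx : 1 ≤ x) :
    uu φ l x ≤ 64 * B * C / ((l + 1) * √x) := by
  have hB0 : 0 ≤ B := by simpa using hB 0 0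
  have hC0 : 0 ≤ C := by have := (uu_nonneg h 0 0).trans (hC 0 0); simpa using this
  have hx0 : (0:ℝ) < x := by exact_mod_cast hx
  obtain ⟨p, q, rfl, hp, hq⟩ : ∃ p q, l = p + q ∧ l ≤ 2 * p + 1 ∧ l ≤ 2 * q + 1 :=
    ⟨l / 2, l - l / 2, by omega, by omega, by omega⟩
  have conc : ∀ p l : ℕ, l ≤ 2 * p + 1 → ∀ x, uu φ p x ≤ 4 * C / ((l:ℝ) + 1) ^ 2 := by
    intro p l hp x
    refine (hC p x).trans ?_
    rw [div_le_div_iff₀ (by positivity) (by positivity)]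
    have : (l:ℝ) + 1 ≤ 2 * (p + 1) := by exact_mod_cast (by omega)
    have h2 : ((l:ℝ) + 1)^2 ≤ (2 * (p + 1))^2 := by gcongr
    nlinarith
  set y := (x + 1) / 2 with hy
  have hy1 : 1 ≤ y := by omega
  have hxy : (x:ℝ) ≤ 4 * y := by exact_mod_cast (by omega)
  have hsq : √(x:ℝ) ≤ 2 * √y := by
    rw [show (2:ℝ) = √4 by rw [show (4:ℝ) = 2^2 by norm_num]; simp, ← Real.sqrt_mul (by norm_num)]
    exact Real.sqrt_le_sqrt hxy
  have hy0 : (0:ℝ) < y := by exact_mod_cast hy1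
  have tl : ∀ r : ℕ, r ≤ p + q → ∑ j ∈ Finset.Ico y (x+1), uu φ r j
      ≤ 4 * B * ((p + q : ℕ) + 1) / √x := by
    intro r hr
    refine (uu_tail h hs B hB r y (x+1) hy1).trans ?_
    rw [div_le_div_iff₀ (by positivity) (by positivity)]
    have h1 : (r:ℝ) ≤ (p + q : ℕ) + 1 := by exact_mod_cast (by omega)
    calc 2 * B * r * √x ≤ 2 * B * ((p + q : ℕ) + 1) * (2 * √y) := by gcongr
      _ = _ := by ring
  set D := 4 * C / (((p + q : ℕ):ℝ) + 1) ^ 2 with hD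
  have hD0 : 0 ≤ D := by positivity
  rw [uu_add, Finset.Nat.sum_antidiagonal_eq_sum_range_succ_mk]
  have up := uu_nonneg h p
  have uq := uu_nonneg h q
  calc ∑ k ∈ Finset.range x.succ, uu φ p k * uu φ q (x - k)
      ≤ ∑ k ∈ Finset.range (x + 1), ((if y ≤ k then uu φ p k * D else 0) +
          (if y ≤ x - k then uu φ q (x - k) * D else 0)) := by
        refine Finset.sum_le_sum fun k hk => ?_
        have hk' : k ≤ x := by simpa [Nat.lt_succ_iff] using hk
        by_cases h1 : y ≤ k
        · rw [if_pos h1]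
          have : uu φ p k * uu φ q (x - k) ≤ uu φ p k * D :=
            mul_le_mul_of_nonneg_left (conc _ _ hq _) (up _)
          have : 0 ≤ (if y ≤ x - k then uu φ q (x - k) * D else 0) := by
            split_ifs
            · exact mul_nonneg (uq _) hD0
            · rfl
          linarith
        · have h2 : y ≤ x - k := by omega
          rw [if_neg h1, if_pos h2, zero_add, mul_comm]
          exact mul_le_mul_of_nonneg_left (conc _ _ hp _) (uq _)
    _ = D * (∑ j ∈ Finset.Ico y (x+1), uu φ p j) + D * (∑ j ∈ Finset.Ico y (x+1), uu φ q j) := by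
        rw [Finset.sum_add_distrib]
        have e : ∀ f : ℕ → ℝ, ∑ k ∈ Finset.range (x+1), (if y ≤ k then f k * D else 0)
            = D * ∑ j ∈ Finset.Ico y (x+1), f j := by
          intro f
          rw [← Finset.sum_filter, Finset.mul_sum]
          refine Finset.sum_congr ?_ fun j _ => mul_comm _ _
          ext i; simp; omega
        rw [← Finset.sum_range_reflect (fun k => if y ≤ x - k then uu φ q (x - k) * D else 0)]
        rw [e, ← e (uu φ q)]
        congr 1
        refine Finset.sum_congr rfl fun k hk => ?_
        have hk' : k ≤ x := by simpa [Nat.lt_succ_iff] using hk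
        rw [show x - (x + 1 - 1 - k) = k by omega]
    _ ≤ D * (4 * B * ((p + q : ℕ) + 1) / √x) + D * (4 * B * ((p + q : ℕ) + 1) / √x) := by
        gcongr
        · exact tl p (by omega)
        · exact tl q (by omega)
    _ = 32 * B * C / (((p + q : ℕ) + 1) * √x) := by
        rw [hD]; field_simp; ring
    _ ≤ _ := by gcongr; norm_num

/-- characteristic function -/
noncomputable def FF (φ : ℕ → ℝ) (t : ℝ) : ℂ :=
  ∑' j : ℕ, (φ j : ℂ) * Complex.exp (((j * t : ℝ) : ℂ) * Complex.I)

lemma norm_term (c s : ℝ) (hc : 0 ≤ c) :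
    ‖(c : ℂ) * Complex.exp ((s : ℂ) * Complex.I)‖ = c := by
  rw [norm_mul, Complex.norm_exp_ofReal_mul_I, mul_one, Complex.norm_of_nonneg hc]

lemma uu_summable {φ : ℕ → ℝ} (h : ∀ i, 0 ≤ φ i)
    (hs : ∀ n, ∑ i ∈ Finset.range n, φ i ≤ 1) (l : ℕ) : Summable (uu φ l) :=
  summable_of_sum_range_le (uu_nonneg h l) (uu_sum_le_one h hs l)

lemma uu_hasSum_FF {φ : ℕ → ℝ} (h : ∀ i, 0 ≤ φ i)
    (hs : ∀ n, ∑ i ∈ Finset.range n, φ i ≤ 1) (t : ℝ) (l : ℕ) :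
    HasSum (fun j : ℕ => (uu φ l j : ℂ) * Complex.exp (((j * t : ℝ) : ℂ) * Complex.I))
      (FF φ t ^ l) := by
  have hn : ∀ l, Summable fun j : ℕ =>
      ‖(uu φ l j : ℂ) * Complex.exp (((j * t : ℝ) : ℂ) * Complex.I)‖ := by
    intro l
    simp only [norm_term _ _ (uu_nonneg h l _)]
    exact uu_summable h hs l
  induction l with
  | zero =>
    have := hasSum_ite_eq (0:ℕ) (1:ℂ)
    rw [pow_zero]
    convert this using 2 with j
    rw [uu_zero]
    split_ifs with hj
    · simp [hj]
    · simp
  | succ l ih =>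
    refine ((hn (l+1)).of_norm).hasSum_iff.2 ?_
    have h1 := tsum_mul_tsum_eq_tsum_sum_antidiagonal_of_summable_norm (hn l) (hn 1)
    rw [ih.tsum_eq] at h1
    simp only [uu_one] at h1
    rw [pow_succ]
    change _ = FF φ t ^ l * FF φ t
    have h2 : FF φ t = ∑' j : ℕ, (φ j : ℂ) * Complex.exp (((j * t : ℝ) : ℂ) * Complex.I) := rfl
    rw [← h2] at h1
    rw [h1]
    refine tsum_congr fun j => ?_
    rw [uu_succ, Complex.ofReal_sum, Finset.sum_mul]
    refine Finset.sum_congr rfl fun p hp => ?_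
    rw [← Finset.HasAntidiagonal.mem_antidiagonal.1 hp]
    push_cast
    rw [add_mul, add_mul, Complex.exp_add]
    ring

lemma FF_continuous {φ : ℕ → ℝ} (h : ∀ i, 0 ≤ φ i)
    (hs : ∀ n, ∑ i ∈ Finset.range n, φ i ≤ 1) : Continuous (FF φ) := by
  have hsum : Summable φ := summable_of_sum_range_le h hs
  refine continuous_tsum (u := φ) (fun i => by fun_prop) hsum fun n x => ?_
  rw [norm_term _ _ (h n)]

lemma integral_char (m : ℤ) :
    ∫ t in (0:ℝ)..(2 * Real.pi), Complex.exp (((m * t : ℝ) : ℂ) * Complex.I) =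
      if m = 0 then ((2 * Real.pi : ℝ) : ℂ) else 0 := by
  split_ifs with hm
  · simp [hm]
  · have hc : (m : ℂ) * Complex.I ≠ 0 := by simp [hm, Complex.I_ne_zero]
    have e : ∀ t : ℝ, Complex.exp (((m * t : ℝ) : ℂ) * Complex.I)
        = Complex.exp ((m : ℂ) * Complex.I * t) := by
      intro t; congr 1; push_cast; ring
    simp only [e]
    rw [integral_exp_mul_complex hc]
    have : Complex.exp ((m : ℂ) * Complex.I * ((2 * Real.pi : ℝ) : ℂ)) = 1 := by
      rw [Complex.exp_eq_one_iff]
      exact ⟨m, by push_cast; ring⟩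
    rw [this]; simp

lemma uu_le_integral {φ : ℕ → ℝ} (h : ∀ i, 0 ≤ φ i)
    (hs : ∀ n, ∑ i ∈ Finset.range n, φ i ≤ 1) (l x : ℕ) :
    2 * Real.pi * uu φ l x ≤ ∫ t in (0:ℝ)..(2 * Real.pi), ‖FF φ t‖ ^ l := by
  have hpi : (0:ℝ) ≤ 2 * Real.pi := by positivity
  let F : ℕ → ℝ → ℂ := fun j t =>
    (uu φ l j : ℂ) * Complex.exp ((((j:ℤ) - x : ℤ) * t : ℝ) * Complex.I)
  have hF : ∀ t, HasSum (fun j => F j t)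
      (FF φ t ^ l * Complex.exp (((-(x * t) : ℝ) : ℂ) * Complex.I)) := by
    intro t
    have := (uu_hasSum_FF h hs t l).mul_right (Complex.exp (((-(x * t) : ℝ) : ℂ) * Complex.I))
    refine this.congr_fun fun j => ?_
    simp only [F]
    rw [mul_assoc, ← Complex.exp_add]
    congr 2
    push_cast; ring
  have hint := intervalIntegral.hasSum_integral_of_dominated_convergence
    (μ := volume) (a := 0) (b := 2 * Real.pi) (F := F)
    (f := fun t => FF φ t ^ l * Complex.exp (((-(x * t) : ℝ) : ℂ) * Complex.I))
    (fun j _ => uu φ l j)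
    (fun j => by
      apply Continuous.aestronglyMeasurable
      simp only [F]; fun_prop)
    (fun j => Filter.Eventually.of_forall fun t _ => by
      simp only [F]
      rw [norm_term _ _ (uu_nonneg h l _)])
    (Filter.Eventually.of_forall fun t _ => uu_summable h hs l)
    (by simp)
    (Filter.Eventually.of_forall fun t _ => hF t)
  have e : ∀ j, ∫ t in (0:ℝ)..(2 * Real.pi), F j t =
      if j = x then ((2 * Real.pi * uu φ l x : ℝ) : ℂ) else 0 := by
    intro j
    simp only [F]
    rw [intervalIntegral.integral_const_mul, integral_char]
    by_cases hj : j = x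
    · subst hj; simp; ring
    · rw [if_neg hj, if_neg (by omega), mul_zero]
  simp only [e] at hint
  have h3 := hint.unique (hasSum_ite_eq x _)
  have h4 : ((2 * Real.pi * uu φ l x : ℝ)) = ‖((2 * Real.pi * uu φ l x : ℝ) : ℂ)‖ := by
    rw [Complex.norm_of_nonneg]
    have := uu_nonneg h l x
    positivity
  rw [h4, ← h3]
  refine (intervalIntegral.norm_integral_le_integral_norm hpi).trans (le_of_eq ?_)
  congr 1
  ext t
  rw [norm_mul, Complex.norm_exp_ofReal_mul_I, mul_one, norm_pow]

/-- the defect of the characteristic function -/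
noncomputable def DD (φ : ℕ → ℝ) (t : ℝ) : ℝ := 1 - ‖FF φ t‖

lemma hasSum_phase {φ : ℕ → ℝ} (h : ∀ i, 0 ≤ φ i) (hs : HasSum φ 1) (t α : ℝ) :
    HasSum (fun j : ℕ => φ j * (1 - Real.cos (j * t - α)))
      (1 - (FF φ t * Complex.exp (((-α : ℝ) : ℂ) * Complex.I)).re) := by
  have hsm : Summable fun j : ℕ => (φ j : ℂ) * Complex.exp (((j * t : ℝ) : ℂ) * Complex.I) := by
    apply Summable.of_norm
    simp only [norm_term _ _ (h _)]
    exact hs.summable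
  have h1 := Complex.hasSum_re (hsm.hasSum.mul_right (Complex.exp (((-α : ℝ) : ℂ) * Complex.I)))
  refine (hs.sub h1).congr_fun ?_
  intro j
  have : (φ j : ℂ) * Complex.exp (((j * t : ℝ) : ℂ) * Complex.I) *
      Complex.exp (((-α : ℝ) : ℂ) * Complex.I) =
      (φ j : ℂ) * Complex.exp (((j * t - α : ℝ) : ℂ) * Complex.I) := by
    rw [mul_assoc, ← Complex.exp_add]; congr 2; push_cast; ring
  rw [this, Complex.re_ofReal_mul, Complex.exp_ofReal_mul_I_re]
  ring

lemma DD_hasSum {φ : ℕ → ℝ} (h : ∀ i, 0 ≤ φ i) (hs : HasSum φ 1) (t : ℝ) :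
    HasSum (fun j : ℕ => φ j * (1 - Real.cos (j * t - (FF φ t).arg))) (DD φ t) := by
  have := hasSum_phase h hs t (FF φ t).arg
  convert this using 1
  unfold DD
  congr 1
  have h1 : FF φ t * Complex.exp (((-(FF φ t).arg : ℝ) : ℂ) * Complex.I) = (‖FF φ t‖ : ℂ) := by
    generalize FF φ t = z
    have h2 := Complex.norm_mul_exp_arg_mul_I z
    calc z * Complex.exp (((-z.arg : ℝ) : ℂ) * Complex.I)
        = (‖z‖ * Complex.exp (z.arg * Complex.I)) *
          Complex.exp (((-z.arg : ℝ) : ℂ) * Complex.I) := by rw [h2]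
      _ = ‖z‖ := by rw [mul_assoc, ← Complex.exp_add]; simp
  rw [h1, Complex.ofReal_re]

lemma DD_le {φ : ℕ → ℝ} (h : ∀ i, 0 ≤ φ i) (hs : HasSum φ 1) (t α S : ℝ)
    (hS : HasSum (fun j : ℕ => φ j * (1 - Real.cos (j * t - α))) S) : DD φ t ≤ S := by
  rw [hS.unique (hasSum_phase h hs t α)]
  unfold DD
  have := Complex.re_le_norm (FF φ t * Complex.exp (((-α : ℝ) : ℂ) * Complex.I))
  rw [norm_mul, Complex.norm_exp_ofReal_mul_I, mul_one] at this
  linarith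

lemma one_sub_cos_sub (A B : ℝ) :
    1 - Real.cos (A - B) ≤ 2 * (1 - Real.cos A) + 2 * (1 - Real.cos B) := by
  rw [Real.cos_sub]
  have h1 := Real.sin_sq_add_cos_sq A
  have h2 := Real.sin_sq_add_cos_sq B
  nlinarith [sq_nonneg (Real.sin A + Real.sin B), sq_nonneg (Real.cos A + Real.cos B - 2)]

lemma DD_sub {φ : ℕ → ℝ} (h : ∀ i, 0 ≤ φ i) (hs : HasSum φ 1) (t s : ℝ) :
    DD φ (t - s) ≤ 2 * DD φ t + 2 * DD φ s := by
  set α := (FF φ t).arg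
  set β := (FF φ s).arg
  have h1 := hasSum_phase h hs (t - s) (α - β)
  refine (DD_le h hs (t - s) (α - β) _ h1).trans ?_
  refine hasSum_le ?_ h1 (((DD_hasSum h hs t).mul_left 2).add ((DD_hasSum h hs s).mul_left 2))
  intro j
  have := mul_le_mul_of_nonneg_left (one_sub_cos_sub (j * t - α) (j * s - β)) (h j)
  have e : (j:ℝ) * t - α - (j * s - β) = j * (t - s) - (α - β) := by ring
  rw [e] at this
  linarith

lemma DD_nonneg {φ : ℕ → ℝ} (h : ∀ i, 0 ≤ φ i) (hs : HasSum φ 1) (t : ℝ) : 0 ≤ DD φ t :=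
  (DD_hasSum h hs t).nonneg fun j => mul_nonneg (h j) (by linarith [Real.cos_le_one (j * t - (FF φ t).arg)])

/-- lower bound by a finite partial sum -/
lemma DD_lower {φ : ℕ → ℝ} (h : ∀ i, 0 ≤ φ i) (hs : HasSum φ 1) (t : ℝ) (j0 : ℕ)
    (s : Finset ℕ) :
    φ j0 / 4 * ∑ j ∈ s, φ j * (1 - Real.cos (((j:ℝ) - j0) * |t|)) ≤ DD φ t := by
  set α := (FF φ t).arg with hα
  have hD := DD_hasSum h hs t
  have nn : ∀ x : ℝ, 0 ≤ 1 - Real.cos x := fun x => by linarith [Real.cos_le_one x]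
  have hj0 : φ j0 * (1 - Real.cos (j0 * t - α)) ≤ DD φ t :=
    le_hasSum hD j0 fun j _ => mul_nonneg (h j) (nn _)
  have hD' : ∑ j ∈ s, φ j * (1 - Real.cos (j * t - α)) ≤ DD φ t :=
    sum_le_hasSum s (fun j _ => mul_nonneg (h j) (nn _)) hD
  have hs' : ∑ j ∈ s, φ j ≤ 1 := sum_le_hasSum s (fun j _ => h j) hs
  have h01 : φ j0 ≤ 1 := le_hasSum hs j0 fun j _ => h j
  have key : ∑ j ∈ s, φ j * (1 - Real.cos (((j:ℝ) - j0) * |t|)) ≤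
      2 * ∑ j ∈ s, φ j * (1 - Real.cos (j * t - α)) +
      2 * (1 - Real.cos (j0 * t - α)) * ∑ j ∈ s, φ j := by
    rw [Finset.mul_sum, Finset.mul_sum, ← Finset.sum_add_distrib]
    refine Finset.sum_le_sum fun j _ => ?_
    have e : Real.cos (((j:ℝ) - j0) * |t|) = Real.cos ((j * t - α) - (j0 * t - α)) := by
      rw [show ((j:ℝ) * t - α) - (j0 * t - α) = (j - j0) * t by ring]
      rcases abs_choice t with h | h
      · rw [h]
      · rw [h, mul_neg, Real.cos_neg]
    rw [e]
    have := mul_le_mul_of_nonneg_left (one_sub_cos_sub (j * t - α) (j0 * t - α)) (h j)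
    linarith
  have k2 := mul_le_mul_of_nonneg_left key (h j0)
  have k3 : φ j0 * (1 - Real.cos (j0 * t - α)) * ∑ j ∈ s, φ j ≤ DD φ t * 1 :=
    mul_le_mul hj0 hs' (Finset.sum_nonneg fun j _ => h j) (DD_nonneg h hs t)
  have k4 : φ j0 * ∑ j ∈ s, φ j * (1 - Real.cos (j * t - α)) ≤ 1 * DD φ t :=
    mul_le_mul h01 hD' (Finset.sum_nonneg fun j _ => mul_nonneg (h j) (nn _)) zero_le_one
  linarith

lemma DD_near_zero {φ : ℕ → ℝ} (h : ∀ i, 0 ≤ φ i) (hs : HasSum φ 1) (κ : ℝ) (hκ : 0 < κ) (N0 : ℕ)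
    (hlow : ∀ N : ℕ, N0 ≤ N → κ / √(N:ℝ) ≤ ∑ j ∈ Finset.Ico N (64 * N), φ j) :
    ∃ c > 0, ∃ t0 > 0, ∀ t : ℝ, |t| ≤ t0 → c * √|t| ≤ DD φ t := by
  obtain ⟨j0, hj0⟩ : ∃ j, 0 < φ j := by
    by_contra! hcon
    have : φ = fun _ => 0 := funext fun j => le_antisymm (hcon j) (h j)
    rw [this] at hs
    exact zero_ne_one (hasSum_zero.unique hs)
  set N1 := N0 + 2 * j0 + 1 with hN1
  refine ⟨φ j0 / 4 * (1 / 8 * (1/256)^2) * κ * 8, by positivity, 1 / (64 * (N1 + 1)),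
    by positivity, ?_⟩
  intro t ht
  by_cases ht0 : t = 0
  · subst ht0; simpa using DD_nonneg h hs 0
  have hta : 0 < |t| := abs_pos.2 ht0
  set N := ⌊1 / (64 * |t|)⌋₊ with hN
  have hNle : (N:ℝ) ≤ 1 / (64 * |t|) := Nat.floor_le (by positivity)
  have hNlt : 1 / (64 * |t|) < N + 1 := Nat.lt_floor_add_one _
  have hNge : N1 ≤ N := by
    apply Nat.le_floor
    rw [le_div_iff₀ (by positivity)] at ht ⊢
    nlinarith
  have hN1' : (1:ℝ) ≤ N := by exact_mod_cast (by omega)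
  have e1 : 64 * (N * |t|) ≤ 1 := by
    rw [le_div_iff₀ (by positivity)] at hNle; linarith
  have e2 : 1 ≤ 128 * (N * |t|) := by
    rw [div_lt_iff₀ (by positivity)] at hNlt; nlinarith
  refine le_trans ?_ (DD_lower h hs t j0 (Finset.Ico N (64 * N)))
  have s1 : ∀ j ∈ Finset.Ico N (64 * N), φ j * (1 / 8 * (1/256)^2) ≤
      φ j * (1 - Real.cos (((j:ℝ) - j0) * |t|)) := by
    intro j hj
    rw [Finset.mem_Ico] at hj
    refine mul_le_mul_of_nonneg_left ?_ (h j)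
    have a1 : (N:ℝ) ≤ 2 * ((j:ℝ) - j0) := by
      have : N + 2 * j0 ≤ 2 * j := by omega
      have : (N:ℝ) + 2 * j0 ≤ 2 * j := by exact_mod_cast this
      linarith
    have a2 : (j:ℝ) - j0 ≤ 64 * N := by
      have : (j:ℝ) ≤ 64 * N := by exact_mod_cast hj.2.le
      have : (0:ℝ) ≤ j0 := by positivity
      linarith
    have v1 : 1 / 256 ≤ ((j:ℝ) - j0) * |t| := by nlinarith
    have v2 : ((j:ℝ) - j0) * |t| ≤ 1 := by nlinarith
    set v := ((j:ℝ) - j0) * |t|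
    have hv : |v| ≤ Real.pi := by
      rw [abs_of_nonneg (by linarith)]; linarith [Real.pi_gt_three]
    have hc := Real.cos_le_one_sub_mul_cos_sq hv
    have hp : 1 / 8 ≤ 2 / Real.pi ^ 2 := by
      rw [div_le_div_iff₀ (by norm_num) (by positivity)]
      nlinarith [Real.pi_le_four, Real.pi_pos]
    have hv2 : (1/256)^2 ≤ v^2 := by gcongr
    have : 1 / 8 * (1/256)^2 ≤ 2 / Real.pi ^ 2 * v^2 := by gcongr
    linarith
  have s2 := Finset.sum_le_sum s1
  rw [← Finset.sum_mul] at s2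
  have s3 := hlow N (by omega)
  have s4 : κ * 8 * √|t| ≤ κ / √(N:ℝ) := by
    rw [le_div_iff₀ (by positivity), mul_assoc, ← Real.sqrt_mul hta.le, mul_assoc]
    have : √(|t| * N) ≤ 1 / 8 := by
      rw [Real.sqrt_le_left (by norm_num)]
      nlinarith
    nlinarith
  calc _ = φ j0 / 4 * ((κ * 8 * √|t|) * (1 / 8 * (1/256)^2)) := by ring
    _ ≤ φ j0 / 4 * ((∑ j ∈ Finset.Ico N (64 * N), φ j) * (1 / 8 * (1/256)^2)) := by
        gcongr; exact s4.trans s3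
    _ ≤ _ := by gcongr

lemma integral_exp_sqrt_abs (b : ℝ) (hb : 0 < b) :
    Integrable (fun x : ℝ => Real.exp (-b * √|x|)) ∧
    ∫ x : ℝ, Real.exp (-b * √|x|) = 4 / b ^ 2 := by
  have h1 : ∫ x : ℝ, Real.exp (-b * √|x|) = 4 / b ^ 2 := by
    rw [integral_comp_abs (f := fun x => Real.exp (-b * √x))]
    have := integral_exp_neg_mul_rpow (p := 1/2) (b := b) (by norm_num) hb
    simp only [← Real.sqrt_eq_rpow] at this
    rw [this]
    have g : Real.Gamma (1 / (1/2) + 1) = 2 := by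
      have := Real.Gamma_nat_eq_factorial 2
      norm_num at this ⊢
    rw [g, show (-1 / (1/2) : ℝ) = -(2:ℕ) by norm_num, Real.rpow_neg hb.le, Real.rpow_natCast]
    field_simp; norm_num
  refine ⟨Integrable.of_integral_ne_zero ?_, h1⟩
  rw [h1]; positivity

lemma interval_bound {φ : ℕ → ℝ} (h : ∀ i, 0 ≤ φ i) (hs : HasSum φ 1)
    (hcont : Continuous (DD φ)) (c t0 : ℝ) (hc : 0 < c)
    (hlow : ∀ t : ℝ, |t| ≤ t0 → c * √|t| ≤ DD φ t) (p q : ℝ) (hpq : p ≤ q) (hq : q - p ≤ t0)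
    (b : ℝ) (hb : 0 < b) :
    ∫ t in p..q, Real.exp (-b * DD φ t) ≤ 64 / (b * c) ^ 2 := by
  obtain ⟨s, hsm, hmin⟩ := isCompact_Icc.exists_isMinOn (nonempty_Icc.2 hpq) hcont.continuousOn
  obtain ⟨i1, i2⟩ := integral_exp_sqrt_abs (b * c / 4) (by positivity)
  have i3 : Integrable (fun t : ℝ => Real.exp (-(b * c / 4) * √|t - s|)) := i1.comp_sub_right s
  calc ∫ t in p..q, Real.exp (-b * DD φ t)
      ≤ ∫ t in p..q, Real.exp (-(b * c / 4) * √|t - s|) := by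
        refine intervalIntegral.integral_mono_on hpq ?_ i3.intervalIntegrable ?_
        · apply Continuous.intervalIntegrable
          fun_prop
        · intro t ht
          apply Real.exp_le_exp.2
          have h1 : DD φ s ≤ DD φ t := hmin ht
          have h2 := DD_sub h hs t s
          have h3 := hlow (t - s) (by
            rw [abs_le]; constructor <;> linarith [ht.1, ht.2, hsm.1, hsm.2])
          nlinarith
    _ ≤ ∫ t, Real.exp (-(b * c / 4) * √|t - s|) := by
        rw [intervalIntegral.integral_of_le hpq]
        exact setIntegral_le_integral i3 (Filter.Eventually.of_forall fun t => (Real.exp_pos _).le)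
    _ = ∫ t, Real.exp (-(b * c / 4) * √|t|) :=
        integral_sub_right_eq_self (fun t => Real.exp (-(b * c / 4) * √|t|)) s
    _ = _ := by rw [i2]; field_simp; norm_num

lemma concentration {φ : ℕ → ℝ} (h : ∀ i, 0 ≤ φ i) (hs : HasSum φ 1) (κ : ℝ) (hκ : 0 < κ) (N0 : ℕ)
    (hlow : ∀ N : ℕ, N0 ≤ N → κ / √(N:ℝ) ≤ ∑ j ∈ Finset.Ico N (64 * N), φ j) :
    ∃ C : ℝ, ∀ l x, uu φ l x ≤ C / ((l : ℝ) + 1) ^ 2 := by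
  have hs' : ∀ n, ∑ i ∈ Finset.range n, φ i ≤ 1 := fun n => sum_le_hasSum _ (fun j _ => h j) hs
  obtain ⟨c, hc, t0, ht0, hD⟩ := DD_near_zero h hs κ hκ N0 hlow
  have hF := FF_continuous h hs'
  have hcont : Continuous (DD φ) := continuous_const.sub hF.norm
  obtain ⟨M, hM⟩ := exists_nat_gt (2 * Real.pi / t0)
  have hpi : 0 < 2 * Real.pi := by positivity
  have hM0 : (0:ℝ) < M := lt_trans (by positivity) hM
  refine ⟨Real.exp 1 * (M * (64 / c ^ 2)) / (2 * Real.pi), fun l x => ?_⟩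
  have h1 := uu_le_integral h hs' l x
  have h2 : ∫ t in (0:ℝ)..(2 * Real.pi), ‖FF φ t‖ ^ l ≤
      ∫ t in (0:ℝ)..(2 * Real.pi), Real.exp 1 * Real.exp (-((l:ℝ) + 1) * DD φ t) := by
    refine intervalIntegral.integral_mono_on hpi.le ?_ ?_ ?_
    · apply Continuous.intervalIntegrable; fun_prop
    · apply Continuous.intervalIntegrable; fun_prop
    · intro t _
      have e1 : ‖FF φ t‖ = 1 - DD φ t := by unfold DD; ring
      have e2 : DD φ t ≤ 1 := by unfold DD; linarith [norm_nonneg (FF φ t)]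
      calc ‖FF φ t‖ ^ l ≤ (Real.exp (-DD φ t)) ^ l := by
            gcongr
            rw [e1]
            linarith [Real.add_one_le_exp (-DD φ t)]
        _ = Real.exp (-(l * DD φ t)) := by rw [← Real.exp_nat_mul]; ring_nf
        _ ≤ _ := by
            rw [← Real.exp_add]
            apply Real.exp_le_exp.2
            linarith
  rw [intervalIntegral.integral_const_mul] at h2
  have h3 : ∫ t in (0:ℝ)..(2 * Real.pi), Real.exp (-((l:ℝ) + 1) * DD φ t) ≤
      M * (64 / (((l:ℝ) + 1) * c) ^ 2) := by
    have e := intervalIntegral.sum_integral_adjacent_intervals (μ := volume)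
      (f := fun t => Real.exp (-((l:ℝ) + 1) * DD φ t))
      (a := fun k : ℕ => k * (2 * Real.pi / M)) (n := M)
      (fun k _ => by apply Continuous.intervalIntegrable; fun_prop)
    have eM : (M:ℝ) * (2 * Real.pi / M) = 2 * Real.pi := by field_simp
    simp only [Nat.cast_zero, zero_mul, eM] at e
    rw [← e]
    have : ∀ k ∈ Finset.range M, ∫ t in ((k:ℕ):ℝ) * (2 * Real.pi / M)..((k + 1 : ℕ) : ℝ) * (2 * Real.pi / M),
        Real.exp (-((l:ℝ) + 1) * DD φ t) ≤ 64 / (((l:ℝ) + 1) * c) ^ 2 := by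
      intro k _
      have hst : 0 < 2 * Real.pi / M := by positivity
      refine interval_bound h hs hcont c t0 hc hD _ _ ?_ ?_ _ (by positivity)
      · push_cast; nlinarith
      · push_cast
        have : 2 * Real.pi / M ≤ t0 := by
          rw [div_lt_iff₀ ht0] at hM
          rw [div_le_iff₀ hM0]; linarith
        linarith
    refine (Finset.sum_le_sum this).trans ?_
    simp
  have h4 : 2 * Real.pi * uu φ l x ≤ Real.exp 1 * (M * (64 / (((l:ℝ) + 1) * c) ^ 2)) :=
    h1.trans (h2.trans (mul_le_mul_of_nonneg_left h3 (Real.exp_pos 1).le))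
  rw [← le_div_iff₀' hpi] at h4
  refine h4.trans (le_of_eq ?_)
  field_simp

lemma tail_bounds {φ : ℕ → ℝ} (h : ∀ i, 0 ≤ φ i) (hs : HasSum φ 1) (K : ℝ) (hK : 0 < K)
    (htail : Tendsto (fun N : ℕ => (N : ℝ) ^ (1/2 : ℝ) * ∑' i : ℕ, φ (N + i))
      atTop (nhds K)) :
    (∃ B : ℝ, ∀ r n : ℕ, ∑ i ∈ Finset.Ico (r + 1) n, φ i ≤ B / √((r : ℝ) + 1)) ∧
    (∃ N0 : ℕ, ∀ N : ℕ, N0 ≤ N → (K / 4) / √(N:ℝ) ≤ ∑ j ∈ Finset.Ico N (64 * N), φ j) := by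
  simp only [← Real.sqrt_eq_rpow] at htail
  have hT : ∀ N : ℕ, ∑ i ∈ Finset.range N, φ i + ∑' i : ℕ, φ (N + i) = 1 := by
    intro N
    have := hs.summable.sum_add_tsum_nat_add N
    simp only [add_comm _ N] at this
    rw [this, hs.tsum_eq]
  have hI : ∀ N n : ℕ, N ≤ n → ∑ i ∈ Finset.Ico N n, φ i =
      ∑ i ∈ Finset.range n, φ i - ∑ i ∈ Finset.range N, φ i := by
    intro N n hn
    exact Finset.sum_Ico_eq_sub _ hn
  constructor
  · obtain ⟨B, hB⟩ := htail.bddAbove_range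
    refine ⟨B, fun r n => ?_⟩
    have h1 : √((r : ℝ) + 1) * ∑' i : ℕ, φ ((r + 1) + i) ≤ B := by
      have := hB ⟨r + 1, rfl⟩
      simpa using this
    have hp : 0 < √((r : ℝ) + 1) := by positivity
    rw [le_div_iff₀ hp]
    refine le_trans ?_ h1
    rw [mul_comm]
    refine mul_le_mul_of_nonneg_left ?_ hp.le
    rcases le_total (r + 1) n with hn | hn
    · rw [hI _ _ hn]
      have := hT (r + 1)
      have := sum_le_hasSum (Finset.range n) (fun j _ => h j) hs
      linarith
    · rw [Finset.Ico_eq_empty_of_le hn, Finset.sum_empty]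
      exact tsum_nonneg fun i => h _
  · have e1 := htail.eventually (lt_mem_nhds (show K / 2 < K by linarith))
    have e2 := htail.eventually (gt_mem_nhds (show K < 2 * K by linarith))
    obtain ⟨N0, hN0⟩ := (e1.and e2).exists_forall_of_atTop
    refine ⟨N0 + 1, fun N hN => ?_⟩
    have a1 := (hN0 N (by omega)).1
    have a2 := (hN0 (64 * N) (by omega)).2
    have hNp : (0:ℝ) < N := by exact_mod_cast (by omega)
    have hp : 0 < √(N:ℝ) := by positivity
    have e : √(((64 * N : ℕ) : ℝ)) = 8 * √(N:ℝ) := by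
      push_cast
      rw [Real.sqrt_mul (by norm_num), show (64:ℝ) = 8 ^ 2 by norm_num, Real.sqrt_sq (by norm_num)]
    rw [e] at a2
    rw [hI _ _ (by omega), div_le_iff₀ hp]
    have b1 := hT N
    have b2 := hT (64 * N)
    have b3 : ∑ i ∈ Finset.range (64 * N), φ i - ∑ i ∈ Finset.range N, φ i =
      ∑' i : ℕ, φ (N + i) - ∑' i : ℕ, φ (64 * N + i) := by linarith
    rw [b3]
    nlinarith

lemma cross_bound {φ : ℕ → ℝ} (h : ∀ i, 0 ≤ φ i)
    (hs : ∀ n, ∑ i ∈ Finset.range n, φ i ≤ 1) (B : ℝ)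
    (hB : ∀ r n : ℕ, ∑ i ∈ Finset.Ico (r + 1) n, φ i ≤ B / √((r : ℝ) + 1))
    (C : ℝ) (hC : ∀ l x, uu φ l x ≤ C / ((l : ℝ) + 1) ^ 2) (l l' n m : ℕ) :
    ∑ i ∈ Finset.range n, uu φ l i * uu φ l' (i + m) ≤ C / (((max l l' : ℕ) : ℝ) + 1) ^ 2 ∧
    (1 ≤ m → ∑ i ∈ Finset.range n, uu φ l i * uu φ l' (i + m) ≤
      64 * B * C / ((((max l l' : ℕ) : ℝ) + 1) * √m)) := by
  have hB0 : 0 ≤ B := by simpa using hB 0 0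
  have hC0 : 0 ≤ C := by have := (uu_nonneg h 0 0).trans (hC 0 0); simpa using this
  have u1 := uu_nonneg h l
  have u2 := uu_nonneg h l'
  have g1 : ∀ D : ℝ, 0 ≤ D → (∀ i, uu φ l' (i + m) ≤ D) →
      ∑ i ∈ Finset.range n, uu φ l i * uu φ l' (i + m) ≤ D := by
    intro D hD0 hD
    calc _ ≤ ∑ i ∈ Finset.range n, uu φ l i * D :=
          Finset.sum_le_sum fun i _ => mul_le_mul_of_nonneg_left (hD i) (u1 i)
      _ = (∑ i ∈ Finset.range n, uu φ l i) * D := by rw [Finset.sum_mul]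
      _ ≤ 1 * D := mul_le_mul_of_nonneg_right (uu_sum_le_one h hs l n) hD0
      _ = D := one_mul D
  have g2 : ∑ i ∈ Finset.range n, uu φ l i * uu φ l' (i + m) ≤
      C / ((l:ℝ) + 1)^2 * ∑ j ∈ Finset.Ico m (n + m), uu φ l' j := by
    have e := Finset.sum_Ico_add' (fun j => C / ((l:ℝ) + 1)^2 * uu φ l' j) 0 n m
    rw [zero_add] at e
    rw [Finset.mul_sum, Finset.range_eq_Ico, ← e]
    exact Finset.sum_le_sum fun i _ => mul_le_mul_of_nonneg_right (hC l i) (u2 _)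
  constructor
  · rcases le_total l l' with hl | hl
    · rw [max_eq_right hl]
      exact g1 _ (by positivity) fun i => hC l' _
    · rw [max_eq_left hl]
      refine g2.trans ?_
      have : ∑ j ∈ Finset.Ico m (n + m), uu φ l' j ≤ 1 := by
        refine le_trans ?_ (uu_sum_le_one h hs l' (n + m))
        apply Finset.sum_le_sum_of_subset_of_nonneg
        · intro j; simp
        · intro j _ _; exact u2 j
      exact mul_le_of_le_one_right (by positivity) this
  · intro hm
    have hm0 : (0:ℝ) < m := by exact_mod_cast hm
    rcases le_total l l' with hl | hl
    · rw [max_eq_right hl]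
      refine g1 _ (by positivity) fun i => ?_
      refine (uu_pointwise h hs B hB C hC l' (i + m) (by omega)).trans ?_
      gcongr
      omega
    · rw [max_eq_left hl]
      refine g2.trans ?_
      have t := uu_tail h hs B hB l' m (n + m) hm
      have t2 : 2 * B * (l':ℝ) / √(m:ℝ) ≤ 64 * B * ((l:ℝ) + 1) / √m := by
        gcongr
        · norm_num
        · have : (l':ℝ) ≤ l := by exact_mod_cast hl
          linarith
      calc _ ≤ C / ((l:ℝ) + 1)^2 * (64 * B * ((l:ℝ) + 1) / √m) := by
            gcongr; exact t.trans t2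
        _ = _ := by field_simp

lemma bilinear_sum (a : ℝ) (ha0 : 0 ≤ a) (ha1 : a ≤ 1) (T : ℕ → ℕ → ℝ) (g : ℕ → ℝ)
    (hg : ∀ L, 0 ≤ g L) (hT : ∀ l l', T l l' ≤ g (max l l')) (N : ℕ) :
    ∑ l ∈ Finset.range N, ∑ l' ∈ Finset.range N, a ^ l * a ^ l' * T l l' ≤
      2 * ∑ L ∈ Finset.range N, a ^ L * (((L:ℝ) + 1) * g L) := by
  set f : ℕ → ℝ := fun L => a ^ L * g L with hf
  have hf0 : ∀ L, 0 ≤ f L := fun L => mul_nonneg (pow_nonneg ha0 _) (hg L)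
  have h1 : ∀ l l', a ^ l * a ^ l' * T l l' ≤
      (if l' ≤ l then f l else 0) + (if l ≤ l' then f l' else 0) := by
    intro l l'
    have p1 : a ^ l ≤ 1 := pow_le_one₀ ha0 ha1
    have p2 : a ^ l' ≤ 1 := pow_le_one₀ ha0 ha1
    have q1 : 0 ≤ a ^ l := pow_nonneg ha0 _
    have q2 : 0 ≤ a ^ l' := pow_nonneg ha0 _
    have step : a ^ l * a ^ l' * T l l' ≤ a ^ l * a ^ l' * g (max l l') :=
      mul_le_mul_of_nonneg_left (hT l l') (by positivity)
    refine step.trans ?_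
    rcases le_total l l' with hl | hl
    · rw [max_eq_right hl, if_pos hl]
      have : a ^ l * a ^ l' * g l' ≤ f l' := by
        simp only [hf]
        exact mul_le_mul_of_nonneg_right (mul_le_of_le_one_left q2 p1) (hg l')
      have : 0 ≤ (if l' ≤ l then f l else 0) := by split_ifs; exacts [hf0 l, le_rfl]
      linarith
    · rw [max_eq_left hl, if_pos hl]
      have : a ^ l * a ^ l' * g l ≤ f l := by
        simp only [hf]
        exact mul_le_mul_of_nonneg_right (mul_le_of_le_one_right q1 p2) (hg l)
      have : 0 ≤ (if l ≤ l' then f l' else 0) := by split_ifs; exacts [hf0 l', le_rfl]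
      linarith
  have h2 : ∀ l ∈ Finset.range N, ∑ l' ∈ Finset.range N, (if l' ≤ l then f l else 0) =
      a ^ l * (((l:ℝ) + 1) * g l) := by
    intro l hl
    rw [← Finset.sum_filter, Finset.sum_const]
    have : Finset.filter (fun l' => l' ≤ l) (Finset.range N) = Finset.range (l + 1) := by
      ext i; simp at hl ⊢; omega
    rw [this, Finset.card_range, nsmul_eq_mul]
    simp only [hf]; push_cast; ring
  calc _ ≤ ∑ l ∈ Finset.range N, ∑ l' ∈ Finset.range N,
        ((if l' ≤ l then f l else 0) + (if l ≤ l' then f l' else 0)) :=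
        Finset.sum_le_sum fun l _ => Finset.sum_le_sum fun l' _ => h1 l l'
    _ = (∑ l ∈ Finset.range N, ∑ l' ∈ Finset.range N, (if l' ≤ l then f l else 0)) +
        ∑ l' ∈ Finset.range N, ∑ l ∈ Finset.range N, (if l ≤ l' then f l' else 0) := by
        simp only [Finset.sum_add_distrib]
        congr 1
        rw [Finset.sum_comm]
    _ = _ := by
        rw [Finset.sum_congr rfl h2, two_mul]

lemma sum_inv_le_log (M : ℕ) (hM : 1 ≤ M) (Q : ℕ) (hQ : M ≤ Q) :
    ∑ L ∈ Finset.Ico M Q, 1 / ((L:ℝ) + 1) ≤ Real.log Q - Real.log M := by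
  induction Q, hQ using Nat.le_induction with
  | base => simp
  | succ Q hQ ih =>
    rw [Finset.sum_Ico_succ_top hQ]
    have hQ0 : (0:ℝ) < Q := by exact_mod_cast (by omega)
    have : Real.log Q - Real.log (Q + 1) ≤ - (1 / ((Q:ℝ) + 1)) := by
      rw [← Real.log_div hQ0.ne' (by positivity)]
      have := Real.log_le_sub_one_of_pos (show 0 < (Q:ℝ) / (Q + 1) by positivity)
      refine this.trans (le_of_eq ?_)
      field_simp; ring
    push_cast
    linarith

lemma harmonic_sum (a : ℝ) (ha0 : 0 < a) (ha1 : a < 1) (M : ℕ) (hM : 1 ≤ M) (b : ℕ → ℝ)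
    (hb1 : ∀ L, b L ≤ 1 / ((L:ℝ) + 1)) (hb2 : ∀ L, b L ≤ 1 / (M:ℝ)) (N : ℕ) :
    ∑ L ∈ Finset.range N, a ^ L * b L ≤ 2 + max 0 (Real.log (2 / ((1 - a) * M))) := by
  have hs : 0 < 1 - a := by linarith
  have hM0 : (0:ℝ) < M := by exact_mod_cast hM
  set Q := ⌈1 / (1 - a)⌉₊ with hQ
  have hQ1 : 1 / (1 - a) ≤ Q := Nat.le_ceil _
  have hQ2 : (Q:ℝ) < 1 / (1 - a) + 1 := Nat.ceil_lt_add_one (by positivity)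
  have hge : 1 ≤ 1 / (1 - a) := by rw [le_div_iff₀ hs]; linarith
  have hQ3 : (Q:ℝ) ≤ 2 / (1 - a) := by
    have : 2 / (1 - a) = 1 / (1 - a) + 1 / (1 - a) := by ring
    linarith
  have pw : ∀ L, a ^ L * b L ≤ (if L < M then 1 / (M:ℝ) else 0) +
      (if M ≤ L ∧ L < Q then 1 / ((L:ℝ) + 1) else 0) + (1 - a) * a ^ L := by
    intro L
    have p0 : 0 ≤ a ^ L := pow_nonneg ha0.le _
    have p1 : a ^ L ≤ 1 := pow_le_one₀ ha0.le ha1.le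
    have p2 : 0 ≤ (1 - a) * a ^ L := by positivity
    by_cases h1 : L < M
    · rw [if_pos h1, if_neg (by omega)]
      have : a ^ L * b L ≤ a ^ L * (1 / M) := mul_le_mul_of_nonneg_left (hb2 L) p0
      have : a ^ L * (1 / (M:ℝ)) ≤ 1 / M := mul_le_of_le_one_left (by positivity) p1
      linarith
    · by_cases h2 : L < Q
      · rw [if_neg h1, if_pos ⟨by omega, h2⟩]
        have : a ^ L * b L ≤ a ^ L * (1 / ((L:ℝ) + 1)) := mul_le_mul_of_nonneg_left (hb1 L) p0
        have : a ^ L * (1 / ((L:ℝ) + 1)) ≤ 1 / ((L:ℝ) + 1) :=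
          mul_le_of_le_one_left (by positivity) p1
        linarith
      · rw [if_neg h1, if_neg (by tauto)]
        have hL : (Q:ℝ) ≤ L := by exact_mod_cast (by omega)
        have : b L ≤ 1 - a := by
          refine (hb1 L).trans ?_
          rw [div_le_iff₀ (by positivity)]
          rw [div_le_iff₀ hs] at hQ1
          nlinarith
        have : a ^ L * b L ≤ a ^ L * (1 - a) := mul_le_mul_of_nonneg_left this p0
        linarith
  refine (Finset.sum_le_sum fun L _ => pw L).trans ?_
  rw [Finset.sum_add_distrib, Finset.sum_add_distrib]
  have s1 : ∑ L ∈ Finset.range N, (if L < M then 1 / (M:ℝ) else 0) ≤ 1 := by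
    rw [← Finset.sum_filter, Finset.sum_const, nsmul_eq_mul, mul_one_div, div_le_one hM0]
    have : Finset.filter (fun L => L < M) (Finset.range N) ⊆ Finset.range M := by
      intro i; simp
    have := Finset.card_le_card this
    rw [Finset.card_range] at this
    exact_mod_cast this
  have s2 : ∑ L ∈ Finset.range N, (if M ≤ L ∧ L < Q then 1 / ((L:ℝ) + 1) else 0) ≤
      max 0 (Real.log (2 / ((1 - a) * M))) := by
    rw [← Finset.sum_filter]
    have : ∑ L ∈ Finset.range N with (M ≤ L ∧ L < Q), 1 / ((L:ℝ) + 1) ≤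
        ∑ L ∈ Finset.Ico M Q, 1 / ((L:ℝ) + 1) := by
      apply Finset.sum_le_sum_of_subset_of_nonneg
      · intro i; simp
      · intro i _ _; positivity
    refine this.trans ?_
    rcases le_total M Q with hMQ | hMQ
    · refine (sum_inv_le_log M hM Q hMQ).trans (le_max_of_le_right ?_)
      have hQ0 : (0:ℝ) < Q := by exact_mod_cast (by omega)
      rw [← Real.log_div hQ0.ne' hM0.ne']
      apply Real.log_le_log (by positivity)
      rw [← div_div]
      gcongr
    · rw [Finset.Ico_eq_empty_of_le hMQ, Finset.sum_empty]
      exact le_max_left _ _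
  have s3 : ∑ L ∈ Finset.range N, (1 - a) * a ^ L ≤ 1 := by
    rw [← Finset.mul_sum, mul_neg_geom_sum]
    have := pow_nonneg ha0.le N
    linarith
  linarith

lemma path_repr (φ : ℕ → ℝ) (hφ0 : φ 0 = 0) (a : ℝ) (Y E : ℕ → ℝ) (h0 : Y 0 = E 0)
    (hrec : ∀ k, 1 ≤ k → Y k = E k + ∑ i ∈ Finset.Icc 1 k, a * φ i * Y (k - i))
    (N k : ℕ) (hk : k ≤ N) :
    Y k = ∑ j ∈ Finset.range (k + 1),
      (∑ l ∈ Finset.range (N + 1), a ^ l * uu φ l (k - j)) * E j := by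
  set Φ : PowerSeries ℝ := PowerSeries.C a * PowerSeries.mk φ with hΦ
  set S : PowerSeries ℝ := ∑ l ∈ Finset.range (N + 1), Φ ^ l with hS
  have hX : PowerSeries.X ∣ Φ := by
    rw [PowerSeries.X_dvd_iff, hΦ]; simp [hφ0]
  have hYE : PowerSeries.mk E = (1 - Φ) * PowerSeries.mk Y := by
    ext n
    rw [sub_mul, one_mul, map_sub, hΦ, mul_assoc, PowerSeries.coeff_C_mul, PowerSeries.coeff_mul,
      Finset.Nat.sum_antidiagonal_eq_sum_range_succ_mk]
    simp only [PowerSeries.coeff_mk]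
    rcases Nat.eq_zero_or_pos n with rfl | hn
    · simp [hφ0, h0]
    · rw [hrec n hn, Finset.sum_range_succ', Finset.range_eq_Ico,
        Finset.sum_Ico_add' (fun i => φ i * Y (n - i)) 0 n 1, hφ0, zero_add, zero_mul,
        add_zero, Finset.mul_sum]
      have : Finset.Ico 1 (n + 1) = Finset.Icc 1 n := by ext i; simp
      rw [this]
      simp only [mul_assoc]
      ring
  have key : S * PowerSeries.mk E = PowerSeries.mk Y - Φ ^ (N + 1) * PowerSeries.mk Y := by
    rw [hYE, ← mul_assoc, mul_comm S, hS, mul_neg_geom_sum]; ring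
  have hz : PowerSeries.coeff k (Φ ^ (N + 1) * PowerSeries.mk Y) = 0 := by
    have : PowerSeries.X ^ (N + 1) ∣ Φ ^ (N + 1) * PowerSeries.mk Y :=
      Dvd.dvd.mul_right (pow_dvd_pow_of_dvd hX _) _
    exact PowerSeries.X_pow_dvd_iff.1 this k (by omega)
  have hc : ∀ i, PowerSeries.coeff i S = ∑ l ∈ Finset.range (N + 1), a ^ l * uu φ l i := by
    intro i
    rw [hS, map_sum]
    refine Finset.sum_congr rfl fun l _ => ?_
    rw [hΦ, mul_pow, ← map_pow, PowerSeries.coeff_C_mul, uu]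
  have := congrArg (PowerSeries.coeff k) key
  rw [map_sub, hz, sub_zero, PowerSeries.coeff_mk, mul_comm S, PowerSeries.coeff_mul,
    Finset.Nat.sum_antidiagonal_eq_sum_range_succ_mk] at this
  rw [← this]
  refine Finset.sum_congr rfl fun j _ => ?_
  simp only [PowerSeries.coeff_mk, hc]
  ring

lemma cov_formula {Ω : Type*} [MeasurableSpace Ω] (P : Measure Ω) [IsProbabilityMeasure P]
    (ε : ℕ → Ω → ℝ) (hεmeas : ∀ k, Measurable (ε k))
    (hεindep : iIndepFun ε P)
    (hεid : ∀ k, Measure.map (ε k) P = Measure.map (ε 0) P)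
    (hεL2 : MemLp (ε 0) 2 P)
    (hεmean : ∫ ω, ε 0 ω ∂P = 0)
    (hεvar : ∫ ω, (ε 0 ω) ^ 2 ∂P = 1)
    (ψ : ℕ → ℝ) (k m : ℕ) :
    ∫ ω, (∑ j ∈ Finset.range (k + 1), ψ (k - j) * ε j ω) *
      (∑ j ∈ Finset.range (k + m + 1), ψ (k + m - j) * ε j ω) ∂P =
    ∑ i ∈ Finset.range (k + 1), ψ i * ψ (i + m) := by
  have hid : ∀ j, IdentDistrib (ε j) (ε 0) P P := fun j =>
    ⟨(hεmeas j).aemeasurable, (hεmeas 0).aemeasurable, hεid j⟩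
  have hL : ∀ j, MemLp (ε j) 2 P := fun j => (hid j).memLp_iff.2 hεL2
  have hmean : ∀ j, ∫ ω, ε j ω ∂P = 0 := fun j => by rw [(hid j).integral_eq, hεmean]
  have hvar : ∀ j, ∫ ω, (ε j ω) ^ 2 ∂P = 1 := fun j => by
    have := ((hid j).comp (u := fun x : ℝ => x ^ 2) (by fun_prop)).integral_eq
    simp only [Function.comp_def] at this
    rw [this, hεvar]
  have hint : ∀ i j, Integrable (fun ω => ε i ω * ε j ω) P := fun i j =>
    (hL i).integrable_mul (hL j)
  have hcov : ∀ i j, ∫ ω, ε i ω * ε j ω ∂P = if i = j then 1 else 0 := by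
    intro i j
    split_ifs with hij
    · subst hij
      rw [← hvar i]; congr 1; ext ω; ring
    · have := (hεindep.indepFun hij).integral_mul_eq_mul_integral
        (hεmeas i).aestronglyMeasurable (hεmeas j).aestronglyMeasurable
      rw [hmean i, zero_mul] at this
      exact this
  have e1 : ∀ ω, (∑ j ∈ Finset.range (k + 1), ψ (k - j) * ε j ω) *
      (∑ j ∈ Finset.range (k + m + 1), ψ (k + m - j) * ε j ω) =
      ∑ i ∈ Finset.range (k + 1), ∑ j ∈ Finset.range (k + m + 1),
        (ψ (k - i) * ψ (k + m - j)) * (ε i ω * ε j ω) := by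
    intro ω
    rw [Finset.sum_mul_sum]
    refine Finset.sum_congr rfl fun i _ => Finset.sum_congr rfl fun j _ => by ring
  simp only [e1]
  rw [integral_finsetSum _ fun i _ => integrable_finsetSum _ fun j _ => (hint i j).const_mul _]
  have e2 : ∀ i ∈ Finset.range (k + 1), ∫ ω, ∑ j ∈ Finset.range (k + m + 1),
        (ψ (k - i) * ψ (k + m - j)) * (ε i ω * ε j ω) ∂P = ψ (k - i) * ψ (k - i + m) := by
    intro i hi
    have hi' : i ≤ k := by simpa [Nat.lt_succ_iff] using hi
    rw [integral_finsetSum _ fun j _ => (hint i j).const_mul _]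
    simp only [integral_const_mul, hcov, mul_ite, mul_one, mul_zero]
    rw [Finset.sum_ite_eq, if_pos (by simp; omega)]
    rw [show k + m - i = k - i + m by omega]
  rw [Finset.sum_congr rfl e2]
  have := Finset.sum_range_reflect (fun i => ψ i * ψ (i + m)) (k + 1)
  rw [← this]
  refine Finset.sum_congr rfl fun i _ => ?_
  rw [show k + 1 - 1 - i = k - i by omega]

lemma final_sum {φ : ℕ → ℝ} (h : ∀ i, 0 ≤ φ i)
    (hs : ∀ n, ∑ i ∈ Finset.range n, φ i ≤ 1) (B : ℝ)
    (hB : ∀ r n : ℕ, ∑ i ∈ Finset.Ico (r + 1) n, φ i ≤ B / √((r : ℝ) + 1))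
    (C : ℝ) (hC : ∀ l x, uu φ l x ≤ C / ((l : ℝ) + 1) ^ 2) (a : ℝ) (ha0 : 0 < a) (ha1 : a < 1)
    (N n m M : ℕ) (hM1 : 1 ≤ M) (hM : M = 1 ∨ (1 ≤ m ∧ M ^ 2 ≤ m)) :
    ∑ i ∈ Finset.range n, (∑ l ∈ Finset.range N, a ^ l * uu φ l i) *
      (∑ l ∈ Finset.range N, a ^ l * uu φ l (i + m)) ≤
    2 * (C + 64 * B * C) * (2 + max 0 (Real.log (2 / ((1 - a) * M)))) := by
  have hB0 : 0 ≤ B := by simpa using hB 0 0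
  have hC0 : 0 ≤ C := by have := (uu_nonneg h 0 0).trans (hC 0 0); simpa using this
  have hM0 : (0:ℝ) < M := by exact_mod_cast hM1
  set D := C + 64 * B * C with hD
  have hD0 : 0 ≤ D := by positivity
  set b : ℕ → ℝ := fun L => min (1 / ((L:ℝ) + 1)) (1 / (M:ℝ)) with hb
  have hb0 : ∀ L, 0 ≤ b L := fun L => by positivity
  set g : ℕ → ℝ := fun L => D * (b L / ((L:ℝ) + 1)) with hg
  have hT : ∀ l l', ∑ i ∈ Finset.range n, uu φ l i * uu φ l' (i + m) ≤ g (max l l') := by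
    intro l l'
    obtain ⟨c1, c2⟩ := cross_bound h hs B hB C hC l l' n m
    set L := max l l'
    have hCD : C ≤ D := by have : 0 ≤ 64 * B * C := by positivity
                           linarith
    have d1 : C / ((L:ℝ) + 1) ^ 2 ≤ D * (1 / ((L:ℝ) + 1) / ((L:ℝ) + 1)) := by
      calc C / ((L:ℝ) + 1) ^ 2 ≤ D / ((L:ℝ) + 1) ^ 2 := by gcongr
        _ = _ := by field_simp
    simp only [hg, hb]
    rcases min_choice (1 / ((L:ℝ) + 1)) (1 / (M:ℝ)) with hm | hm
    · rw [hm]; exact c1.trans d1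
    · rw [hm]
      rcases hM with rfl | ⟨h1, h2⟩
      · refine (c1.trans d1).trans ?_
        gcongr
        simp
      · refine (c2 h1).trans ?_
        have hm0 : (0:ℝ) < m := by exact_mod_cast h1
        have : (M:ℝ) ≤ √m := by
          apply Real.le_sqrt_of_sq_le
          exact_mod_cast h2
        calc 64 * B * C / (((L:ℝ) + 1) * √m) ≤ D / (((L:ℝ) + 1) * M) := by
              gcongr
              linarith
          _ = _ := by field_simp
  have e : ∑ i ∈ Finset.range n, (∑ l ∈ Finset.range N, a ^ l * uu φ l i) *
      (∑ l ∈ Finset.range N, a ^ l * uu φ l (i + m)) =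
      ∑ l ∈ Finset.range N, ∑ l' ∈ Finset.range N, a ^ l * a ^ l' *
        ∑ i ∈ Finset.range n, uu φ l i * uu φ l' (i + m) := by
    simp only [Finset.sum_mul_sum]
    simp only [Finset.mul_sum]
    rw [Finset.sum_comm]
    refine Finset.sum_congr rfl fun l _ => ?_
    rw [Finset.sum_comm]
    refine Finset.sum_congr rfl fun l' _ => Finset.sum_congr rfl fun i _ => by ring
  rw [e]
  refine (bilinear_sum a ha0.le ha1.le _ g (fun L => by simp only [hg]; have := hb0 L; positivity)
    hT N).trans ?_
  have e2 : ∀ L : ℕ, a ^ L * (((L:ℝ) + 1) * g L) = D * (a ^ L * b L) := by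
    intro L; simp only [hg]; field_simp
  simp only [e2]
  rw [← Finset.mul_sum, mul_assoc]
  gcongr
  exact harmonic_sum a ha0 ha1 M hM1 b (fun L => min_le_left _ _) (fun L => min_le_right _ _) N

lemma log_diag (s e : ℝ) (hs : 0 < s) (hs1 : s < 1) (he : 0 < e) :
    2 + max 0 (Real.log (2 / (s * (1:ℕ)))) ≤ (4 + 1 / e) * s ^ (-e) := by
  have h1 : 1 ≤ s ^ (-e) := Real.one_le_rpow_of_pos_of_le_one_of_nonpos hs hs1.le (by linarith)
  have h2 : Real.log (2 / (s * (1:ℕ))) ≤ 1 + s ^ (-e) / e := by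
    rw [Nat.cast_one, mul_one, div_eq_mul_inv, Real.log_mul (by norm_num) (by positivity)]
    have a1 := Real.log_le_rpow_div (inv_pos.2 hs).le he
    rw [Real.inv_rpow hs.le, ← Real.rpow_neg hs.le] at a1
    have a2 : Real.log 2 ≤ 1 := by
      have := Real.log_le_sub_one_of_pos (show (0:ℝ) < 2 by norm_num); linarith
    linarith
  have h3 : 0 ≤ s ^ (-e) / e := by positivity
  have h4 : max 0 (Real.log (2 / (s * (1:ℕ)))) ≤ 1 + s ^ (-e) / e := max_le (by positivity) h2
  have : (4 + 1 / e) * s ^ (-e) = 4 * s ^ (-e) + s ^ (-e) / e := by ring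
  linarith

lemma log_off (s e : ℝ) (hs : 0 < s) (he : 0 < e) (m : ℕ) (hm : 1 ≤ m) :
    2 + max 0 (Real.log (2 / (s * (Nat.sqrt m : ℕ)))) ≤
      (5 + 1 / e) + (5 + 1 / e) * (s ^ 2 * (m:ℝ)) ^ (-e) := by
  have hm0 : (0:ℝ) < m := by exact_mod_cast hm
  have hM1 : 1 ≤ Nat.sqrt m := Nat.sqrt_pos.2 hm
  set M := Nat.sqrt m with hM
  have hM0 : (0:ℝ) < M := by exact_mod_cast hM1
  set z := s ^ 2 * (m:ℝ) with hz
  have hz0 : 0 < z := by positivity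
  have hmM : (m:ℝ) ≤ 4 * (M:ℝ) ^ 2 := by
    have h1 : m < (M + 1) * (M + 1) := Nat.lt_succ_sqrt m
    have h2 : m ≤ 4 * M ^ 2 := by nlinarith
    exact_mod_cast h2
  have h2 : Real.log (2 / (s * M)) ≤ 3 + z ^ (-e) / e := by
    have b1 : 2 * Real.log (2 / (s * M)) ≤ Real.log (16 * z⁻¹) := by
      rw [show (2:ℝ) * Real.log (2 / (s * M)) = ((2:ℕ):ℝ) * Real.log (2 / (s * M)) by norm_num,
        ← Real.log_pow]
      apply Real.log_le_log (by positivity)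
      rw [div_pow, hz, ← div_eq_mul_inv, div_le_div_iff₀ (by positivity) (by positivity)]
      have : s ^ 2 * m ≤ s ^ 2 * (4 * (M:ℝ) ^ 2) := by gcongr
      nlinarith
    rw [Real.log_mul (by norm_num) (by positivity)] at b1
    have a1 := Real.log_le_rpow_div (inv_pos.2 hz0).le he
    rw [Real.inv_rpow hz0.le, ← Real.rpow_neg hz0.le] at a1
    have a2 : Real.log 16 ≤ 4 := by
      rw [show (16:ℝ) = 2 ^ 4 by norm_num, Real.log_pow]
      have := Real.log_le_sub_one_of_pos (show (0:ℝ) < 2 by norm_num)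
      push_cast; linarith
    have h3 : 0 ≤ z ^ (-e) / e := by positivity
    linarith
  have h3 : 0 ≤ z ^ (-e) / e := by positivity
  have h4 : max 0 (Real.log (2 / (s * M))) ≤ 3 + z ^ (-e) / e := max_le (by positivity) h2
  have h5 : 0 ≤ z ^ (-e) := by positivity
  have h6 : 0 ≤ 1 / e := by positivity
  have : (5 + 1 / e) * z ^ (-e) = 5 * z ^ (-e) + z ^ (-e) / e := by ring
  linarith

/-- heavy-tail bound, critical case `α = 1/2`. -/
theorem ar_covariance_bound_critical
    {Ω : Type*} [MeasurableSpace Ω] (P : Measure Ω) [IsProbabilityMeasure P]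
    (φ : ℕ → ℝ) (hφnn : ∀ i, 0 ≤ φ i) (hφ0 : φ 0 = 0) (hφsum : ∑' i : ℕ, φ i = 1)
    (K : ℝ) (hK : 0 < K)
    (htail : Tendsto (fun N : ℕ => (N : ℝ) ^ (1/2 : ℝ) * ∑' i : ℕ, φ (N + i))
      atTop (nhds K))
    (δ : ℝ) (hδ : δ = K * Real.Gamma (1/2) / (1/2))
    (a : ℕ → ℝ) (ha : ∀ n, 1 ≤ n → 0 < a n ∧ a n < 1)
    (lam : ℝ) (hlam : 0 < lam)
    (haconv : Tendsto (fun n : ℕ => (n : ℝ) ^ (1/2 : ℝ) * (1 - a n))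
      atTop (nhds (lam * δ)))
    -- the `ε_k` are iid, square integrable, centered with unit variance
    (ε : ℕ → Ω → ℝ) (hεmeas : ∀ k, Measurable (ε k))
    (hεindep : iIndepFun ε P)
    (hεid : ∀ k, Measure.map (ε k) P = Measure.map (ε 0) P)
    (hεL2 : MemLp (ε 0) 2 P)
    (hεmean : ∫ ω, ε 0 ω ∂P = 0)
    (hεvar : ∫ ω, (ε 0 ω) ^ 2 ∂P = 1)
    (y : ℕ → ℕ → Ω → ℝ)
    (hy0 : ∀ n, y n 0 = ε 0)
    (hyrec : ∀ n k, 1 ≤ k → ∀ ω,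
      y n k ω = ε k ω + ∑ i ∈ Finset.Icc 1 k, a n * φ i * y n (k - i) ω)
    : ∀ e : ℝ, 0 < e → e < 1 →
      ∃ c > 0, ∀ n, 1 ≤ n → ∀ k k' : ℕ,
        (k = k' → ∫ ω, y n k ω * y n k' ω ∂P ≤ c * (1 - a n) ^ (-e)) ∧
        (k ≠ k' → ∫ ω, y n k ω * y n k' ω ∂P ≤
          c + c * ((1 - a n) ^ 2 * |(k : ℝ) - (k' : ℝ)|) ^ (-e)) := by
  have hs : HasSum φ 1 := by
    have hsm : Summable φ := by
      by_contra hn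
      rw [tsum_eq_zero_of_not_summable hn] at hφsum
      exact zero_ne_one hφsum
    rw [← hφsum]; exact hsm.hasSum
  have hs' : ∀ n, ∑ i ∈ Finset.range n, φ i ≤ 1 :=
    fun n => sum_le_hasSum _ (fun j _ => hφnn j) hs
  obtain ⟨⟨B, hB⟩, N0, hN0⟩ := tail_bounds hφnn hs K hK htail
  obtain ⟨C, hC⟩ := concentration hφnn hs (K / 4) (by positivity) N0 hN0
  have hB0 : 0 ≤ B := by simpa using hB 0 0
  have hC0 : 0 ≤ C := by have := (uu_nonneg hφnn 0 0).trans (hC 0 0); simpa using this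
  intro e he he1
  set D := 2 * (C + 64 * B * C) with hD
  have hD0 : 0 ≤ D := by positivity
  -- the covariance bound for ordered indices
  have main : ∀ n, 1 ≤ n → ∀ k m M : ℕ, 1 ≤ M → (M = 1 ∨ (1 ≤ m ∧ M ^ 2 ≤ m)) →
      ∫ ω, y n k ω * y n (k + m) ω ∂P ≤ D * (2 + max 0 (Real.log (2 / ((1 - a n) * M)))) := by
    intro n hn k m M hM1 hM
    obtain ⟨a0, a1⟩ := ha n hn
    have rep : ∀ i, i ≤ k + m → ∀ ω, y n i ω = ∑ j ∈ Finset.range (i + 1),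
        (∑ l ∈ Finset.range (k + m + 1), a n ^ l * uu φ l (i - j)) * ε j ω := by
      intro i hi ω
      exact path_repr φ hφ0 (a n) (fun i => y n i ω) (fun i => ε i ω) (by simp [hy0])
        (fun i h1 => hyrec n i h1 ω) (k + m) i hi
    simp only [rep k (by omega), rep (k + m) le_rfl]
    rw [cov_formula P ε hεmeas hεindep hεid hεL2 hεmean hεvar
      (fun i => ∑ l ∈ Finset.range (k + m + 1), a n ^ l * uu φ l i) k m]
    exact final_sum hφnn hs' B hB C hC (a n) a0 a1 (k + m + 1) (k + 1) m M hM1 hM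
  have off : ∀ n, 1 ≤ n → ∀ k m : ℕ, 1 ≤ m → ∫ ω, y n k ω * y n (k + m) ω ∂P ≤
      D * ((5 + 1 / e) + (5 + 1 / e) * ((1 - a n) ^ 2 * (m:ℝ)) ^ (-e)) := by
    intro n hn k m hm
    refine (main n hn k m (Nat.sqrt m) (Nat.sqrt_pos.2 hm) (Or.inr ⟨hm, Nat.sqrt_le' m⟩)).trans ?_
    exact mul_le_mul_of_nonneg_left
      (log_off (1 - a n) e (by linarith [(ha n hn).2]) he m hm) hD0
  refine ⟨D * (5 + 1 / e) + 1, by positivity, fun n hn k k' => ⟨?_, ?_⟩⟩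
  · rintro rfl
    obtain ⟨a0, a1⟩ := ha n hn
    have h1 := main n hn k 0 1 le_rfl (Or.inl rfl)
    rw [add_zero] at h1
    have h2 := log_diag (1 - a n) e (by linarith) (by linarith) he
    have h3 : 0 ≤ (1 - a n) ^ (-e) := Real.rpow_nonneg (by linarith) _
    have h4 := mul_le_mul_of_nonneg_left h2 hD0
    have h5 : 0 ≤ D * (1 - a n) ^ (-e) := mul_nonneg hD0 h3
    nlinarith
  · intro hkk
    obtain ⟨a0, a1⟩ := ha n hn
    have fin : ∀ m : ℕ, 1 ≤ m → D * ((5 + 1 / e) + (5 + 1 / e) * ((1 - a n) ^ 2 * (m:ℝ)) ^ (-e)) ≤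
        (D * (5 + 1 / e) + 1) + (D * (5 + 1 / e) + 1) * ((1 - a n) ^ 2 * (m:ℝ)) ^ (-e) := by
      intro m hm
      have : 0 ≤ ((1 - a n) ^ 2 * (m:ℝ)) ^ (-e) := Real.rpow_nonneg (by positivity) _
      nlinarith
    rcases lt_or_gt_of_ne hkk with hlt | hlt
    · obtain ⟨m, rfl⟩ := Nat.exists_eq_add_of_lt hlt
      have e1 : |(k:ℝ) - ((k + m + 1 : ℕ):ℝ)| = ((m + 1 : ℕ) : ℝ) := by
        rw [abs_sub_comm, abs_of_nonneg] <;> push_cast <;> ring_nf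
        positivity
      rw [e1]
      exact (off n hn k (m + 1) (by omega)).trans (fin (m + 1) (by omega))
    · obtain ⟨m, rfl⟩ := Nat.exists_eq_add_of_lt hlt
      have e1 : |((k' + m + 1 : ℕ):ℝ) - (k':ℝ)| = ((m + 1 : ℕ) : ℝ) := by
        rw [abs_of_nonneg] <;> push_cast <;> ring_nf
        positivity
      rw [e1]
      have := (off n hn k' (m + 1) (by omega)).trans (fin (m + 1) (by omega))
      refine le_trans (le_of_eq ?_) this
      congr 1
      ext ω
      exact mul_comm _ _
end

section
/- (Intermediate bound in the critical case.) Let φ : ℕ → ℝ with φ_i ≥ 0, φ_0 = 0, ∑_{i=1}^∞ φ_i = 1, and assume there exists K > 0 such that N^{1/2} ∑_{i=N}^∞ φ_i → K as N → ∞. Set δ = K Γ(1/2)/(1/2), and let (a_n)_{n≥1} satisfy 0 < a_n < 1 and n^{1/2}(1−a_n) → λδ for some λ > 0. Let (ε_k)_{k≥0} be iid real random variables with E[ε_0] = 0 and E[ε_0²] = 1, and for each n define y^n_0 = ε_0 and y^n_k = ε_k + ∑_{i=1}^k a_n φ_i y^n_{k−i} for k ≥ 1. Then there exists c > 0 such that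 for every n ≥ 1 and every k ≥ 0, E[(y^n_k)²] ≤ c |log(1−a_n)|. -/
open MeasureTheory ProbabilityTheory Filter Set

/-- coefficients of `1 / (1 - a φ(X))`. -/
noncomputable def arPsi (a : ℝ) (φ : ℕ → ℝ) (k : ℕ) : ℝ :=
  PowerSeries.coeff k (1 - PowerSeries.C a * PowerSeries.mk φ)⁻¹

lemma arPsi_inv (a : ℝ) (φ : ℕ → ℝ) (h0 : φ 0 = 0) :
    (1 - PowerSeries.C a * PowerSeries.mk φ) * (1 - PowerSeries.C a * PowerSeries.mk φ)⁻¹ = 1 := by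
  apply PowerSeries.mul_inv_cancel
  simp [h0]

lemma arPsi_rec (a : ℝ) (φ : ℕ → ℝ) (h0 : φ 0 = 0) (k : ℕ) :
    arPsi a φ k = (if k = 0 then 1 else 0)
      + a * ∑ p ∈ Finset.HasAntidiagonal.antidiagonal k, φ p.1 * arPsi a φ p.2 := by
  have h := arPsi_inv a φ h0
  have h2 := congrArg (PowerSeries.coeff k) h
  rw [sub_mul, one_mul, map_sub, mul_assoc, PowerSeries.coeff_C_mul, PowerSeries.coeff_mul,
    PowerSeries.coeff_one] at h2
  simp only [PowerSeries.coeff_mk] at h2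
  unfold arPsi
  linarith

lemma arPsi_nonneg (a : ℝ) (ha : 0 ≤ a) (φ : ℕ → ℝ) (hφ : ∀ i, 0 ≤ φ i) (h0 : φ 0 = 0) (k : ℕ) :
    0 ≤ arPsi a φ k := by
  induction k using Nat.strong_induction_on with
  | _ k ih =>
    rw [arPsi_rec a φ h0]
    apply add_nonneg
    · split_ifs <;> norm_num
    · apply mul_nonneg ha
      apply Finset.sum_nonneg
      intro p hp
      rw [Finset.HasAntidiagonal.mem_antidiagonal] at hp
      rcases Nat.eq_zero_or_pos p.1 with h | h
      · rw [h, h0, zero_mul]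
      · exact mul_nonneg (hφ _) (ih _ (by omega))

lemma arPsi_sum (a : ℝ) (ha : 0 ≤ a) (ha1 : a < 1) (φ : ℕ → ℝ) (hφ : ∀ i, 0 ≤ φ i) (h0 : φ 0 = 0)
    (hs : HasSum φ 1) : Summable (arPsi a φ) := by
  apply summable_of_sum_range_le (c := 1 / (1 - a)) (arPsi_nonneg a ha φ hφ h0)
  intro N
  have hp := arPsi_nonneg a ha φ hφ h0
  have h1 : ∑ k ∈ Finset.range N, arPsi a φ k ≤ 1 + a * ∑ k ∈ Finset.range N, arPsi a φ k := by
    calc ∑ k ∈ Finset.range N, arPsi a φ k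
        = ∑ k ∈ Finset.range N, (if k = 0 then 1 else 0)
          + a * ∑ k ∈ Finset.range N, ∑ j ∈ Finset.range (k+1), arPsi a φ j * φ (k - j) := by
          rw [Finset.mul_sum, ← Finset.sum_add_distrib]
          apply Finset.sum_congr rfl
          intro k _
          rw [arPsi_rec a φ h0]
          rw [← Finset.Nat.sum_antidiagonal_swap, Finset.Nat.sum_antidiagonal_eq_sum_range_succ_mk]
          simp [mul_comm]
      _ = ∑ k ∈ Finset.range N, (if k = 0 then 1 else 0)
          + a * ∑ j ∈ Finset.range N, ∑ i ∈ Finset.range (N - j), arPsi a φ j * φ i := by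
          rw [Finset.sum_range_diag_flip N (fun j i => arPsi a φ j * φ i)]
      _ ≤ _ := by
          gcongr with j hj
          · simp only [Finset.sum_ite_eq', Finset.mem_range]; split_ifs <;> norm_num
          · rw [← Finset.mul_sum]
            apply mul_le_of_le_one_right (hp _)
            exact sum_le_hasSum _ (fun i _ => hφ i) hs
  rw [le_div_iff₀ (by linarith)]
  linarith

lemma ar_repr (a : ℝ) (φ : ℕ → ℝ) (h0 : φ 0 = 0) (e y : ℕ → ℝ) (hy0 : y 0 = e 0)
    (hy : ∀ k, 1 ≤ k → y k = e k + ∑ i ∈ Finset.Icc 1 k, a * φ i * y (k - i)) (k : ℕ) :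
    y k = ∑ i ∈ Finset.range (k+1), arPsi a φ (k - i) * e i := by
  have hY : PowerSeries.mk y = PowerSeries.mk e + PowerSeries.C a * PowerSeries.mk φ * PowerSeries.mk y := by
    ext k
    rw [map_add, mul_assoc, PowerSeries.coeff_C_mul, PowerSeries.coeff_mul,
      Finset.Nat.sum_antidiagonal_eq_sum_range_succ_mk]
    simp only [PowerSeries.coeff_mk]
    rw [Finset.sum_range_succ', h0]
    rcases Nat.eq_zero_or_pos k with h | h
    · subst h; simp [hy0]
    · rw [hy k h]
      have e : Finset.Icc 1 k = Finset.Ico 1 (k + 1) := by ext; simp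
      rw [e, Finset.sum_Ico_eq_sum_range, zero_mul, add_zero, Finset.mul_sum]
      simp only [Nat.add_sub_cancel]
      congr 1
      apply Finset.sum_congr rfl
      intro i _
      rw [add_comm 1 i, mul_assoc]
  have h := arPsi_inv a φ h0
  have h2 : PowerSeries.mk y = PowerSeries.mk e * (1 - PowerSeries.C a * PowerSeries.mk φ)⁻¹ := by
    calc PowerSeries.mk y = PowerSeries.mk y * ((1 - PowerSeries.C a * PowerSeries.mk φ) * (1 - PowerSeries.C a * PowerSeries.mk φ)⁻¹) := by rw [h, mul_one]
      _ = (PowerSeries.mk y - PowerSeries.C a * PowerSeries.mk φ * PowerSeries.mk y) * (1 - PowerSeries.C a * PowerSeries.mk φ)⁻¹ := by ring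
      _ = _ := by
        congr 1
        exact sub_eq_of_eq_add hY
  have h3 := congrArg (PowerSeries.coeff k) h2
  rw [PowerSeries.coeff_mul, Finset.Nat.sum_antidiagonal_eq_sum_range_succ_mk] at h3
  simp only [PowerSeries.coeff_mk] at h3
  rw [h3]
  apply Finset.sum_congr rfl
  intro i _
  rw [mul_comm, arPsi]

lemma ar_moment {Ω : Type*} [MeasurableSpace Ω] (P : Measure Ω) [IsProbabilityMeasure P]
    (ε : ℕ → Ω → ℝ) (hεmeas : ∀ k, Measurable (ε k))
    (hεindep : iIndepFun ε P)
    (hεid : ∀ k, Measure.map (ε k) P = Measure.map (ε 0) P)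
    (hεL2 : MemLp (ε 0) 2 P)
    (hεmean : ∫ ω, ε 0 ω ∂P = 0)
    (hεvar : ∫ ω, (ε 0 ω) ^ 2 ∂P = 1) (c : ℕ → ℝ) (s : Finset ℕ) :
    ∫ ω, (∑ i ∈ s, c i * ε i ω) ^ 2 ∂P = ∑ i ∈ s, c i ^ 2 := by
  have hid : ∀ k, IdentDistrib (ε k) (ε 0) P P := fun k =>
    ⟨(hεmeas k).aemeasurable, (hεmeas 0).aemeasurable, hεid k⟩
  have hL : ∀ k, MemLp (ε k) 2 P := fun k => (hid k).memLp_iff.2 hεL2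
  have hm : ∀ k, ∫ ω, ε k ω ∂P = 0 := fun k => by rw [(hid k).integral_eq, hεmean]
  have hv : ∀ k, variance (ε k) P = 1 := fun k => by
    rw [(hid k).variance_eq, variance_of_integral_eq_zero (hεmeas 0).aemeasurable hεmean, hεvar]
  have h := IndepFun.variance_sum (μ := P) (X := fun i => fun ω => c i * ε i ω) (s := s)
    (fun i _ => (hL i).const_mul (c i)) (fun i _ j _ hij =>
      (hεindep.indepFun hij).comp (φ := fun x => c i * x) (ψ := fun x => c j * x)
        (measurable_const_mul _) (measurable_const_mul _))
  rw [variance_of_integral_eq_zero] at h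
  · simp only [variance_const_mul, hv, mul_one, Finset.sum_apply] at h
    exact h
  · apply Measurable.aemeasurable
    rw [show (∑ i ∈ s, fun ω => c i * ε i ω) = fun ω => ∑ i ∈ s, c i * ε i ω by ext; simp]
    exact Finset.measurable_sum _ (fun i _ => (hεmeas i).const_mul _)
  · simp only [Finset.sum_apply]
    rw [integral_finsetSum _ (fun i _ => ((hL i).integrable (by norm_num)).const_mul _)]
    simp [integral_const_mul, hm]

lemma ar_bessel (p : ℕ → ℝ) (hnn : ∀ k, 0 ≤ p k) (hp : Summable p) (N : ℕ) :
    ∑ k ∈ Finset.range N, p k ^ 2 ≤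
      ∫ x in (0:ℝ)..1, ‖∑' k : ℕ, (p k : ℂ) * fourier (T := 1) (k : ℤ) (x : UnitAddCircle)‖ ^ 2 := by
  set f : ℕ → C(UnitAddCircle, ℂ) := fun k => (p k : ℂ) • fourier (T := 1) (k : ℤ) with hf
  have hfs : Summable f := by
    apply Summable.of_norm
    apply hp.congr
    intro k
    have h1 : ‖fourier (T := 1) (k : ℤ)‖ = 1 := fourier_norm _
    show p k = ‖(p k : ℂ) • fourier (T := 1) (k : ℤ)‖
    rw [norm_smul, h1]
    simp [abs_of_nonneg (hnn k)]
  obtain ⟨g, hg⟩ := hfs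
  have hgx : ∀ x, g x = ∑' k : ℕ, (p k : ℂ) * fourier (T := 1) (k : ℤ) x := by
    intro x
    have := (hg.mapL (ContinuousMap.evalCLM ℂ x)).tsum_eq
    simpa [hf] using this.symm
  have hL := hg.mapL (ContinuousMap.toLp (E := ℂ) 2 (AddCircle.haarAddCircle (T := 1)) ℂ)
  set G := (ContinuousMap.toLp (E := ℂ) 2 (AddCircle.haarAddCircle (T := 1)) ℂ) g with hG
  have hon := orthonormal_fourier (T := 1)
  have hin : ∀ j : ℕ, inner ℂ (fourierLp (T := 1) 2 (j : ℤ)) G = (p j : ℂ) := by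
    intro j
    have h1 := hL.mapL (innerSL ℂ (fourierLp (T := 1) 2 (j : ℤ)))
    refine h1.unique ?_
    have h2 : ∀ k, (innerSL ℂ (fourierLp (T := 1) 2 (j : ℤ)))
        ((ContinuousMap.toLp (E := ℂ) 2 (AddCircle.haarAddCircle (T := 1)) ℂ) (f k))
        = if k = j then (p j : ℂ) else 0 := by
      intro k
      have : (ContinuousMap.toLp (E := ℂ) 2 (AddCircle.haarAddCircle (T := 1)) ℂ) (f k)
        = (p k : ℂ) • fourierLp (T := 1) 2 (k : ℤ) := by
        simp only [hf]
        rw [map_smul]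
      rw [this, map_smul, innerSL_apply_apply, orthonormal_iff_ite.1 hon]
      by_cases h : k = j
      · subst h; simp
      · have h' : ¬ ((j : ℤ) = k) := fun e => h (by exact_mod_cast e.symm)
        simp [h, h']
    simp only [h2]
    exact hasSum_ite_eq j _
  have hB := Orthonormal.sum_inner_products_le (s := Finset.range N) G
    (hon.comp (fun k : ℕ => (k : ℤ)) Nat.cast_injective)
  simp only [Function.comp_apply, hin] at hB
  have hnorm : ‖G‖ ^ 2 = ∫ x in (0:ℝ)..1, ‖g (x : UnitAddCircle)‖ ^ 2 := by
    have h3 : (‖G‖ ^ 2 : ℂ) = inner ℂ G G := by rw [inner_self_eq_norm_sq_to_K]; rfl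
    rw [hG, ContinuousMap.inner_toLp, ← hG] at h3
    have h4 : ∀ x, g x * (starRingEnd ℂ) (g x) = ((‖g x‖ ^ 2 : ℝ) : ℂ) := by
      intro x; rw [Complex.mul_conj, Complex.normSq_eq_norm_sq]
    simp only [h4] at h3
    rw [integral_complex_ofReal] at h3
    have h5 : ‖G‖ ^ 2 = ∫ x, ‖g x‖ ^ 2 ∂(AddCircle.haarAddCircle (T := 1)) := by exact_mod_cast h3
    rw [h5, AddCircle.integral_haarAddCircle]
    have := UnitAddCircle.intervalIntegral_preimage 0 (fun x => ‖g x‖ ^ 2)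
    rw [zero_add] at this
    rw [this]; simp
  rw [hnorm] at hB
  simp only [hgx] at hB
  simpa using hB

/-- The real part of `1 - φ̂`. -/
noncomputable def arH (φ : ℕ → ℝ) (x : ℝ) : ℝ := ∑' k : ℕ, φ k * (1 - Real.cos (2 * Real.pi * k * x))

lemma arH_summable (φ : ℕ → ℝ) (hφ : ∀ i, 0 ≤ φ i) (hs : Summable φ) (x : ℝ) :
    Summable (fun k : ℕ => φ k * (1 - Real.cos (2 * Real.pi * k * x))) := by
  apply Summable.of_nonneg_of_le _ _ (hs.mul_right 2)
  · intro k; exact mul_nonneg (hφ k) (by linarith [Real.cos_le_one (2 * Real.pi * k * x)])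
  · intro k; exact mul_le_mul_of_nonneg_left (by linarith [Real.neg_one_le_cos (2 * Real.pi * k * x)]) (hφ k)

lemma arH_nonneg (φ : ℕ → ℝ) (hφ : ∀ i, 0 ≤ φ i) (x : ℝ) : 0 ≤ arH φ x := by
  apply tsum_nonneg
  intro k; exact mul_nonneg (hφ k) (by linarith [Real.cos_le_one (2 * Real.pi * k * x)])

lemma arH_continuous (φ : ℕ → ℝ) (hφ : ∀ i, 0 ≤ φ i) (hs : Summable φ) : Continuous (arH φ) := by
  apply continuous_tsum (u := fun k => φ k * 2)
  · intro k; fun_prop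
  · exact hs.mul_right 2
  · intro k x
    rw [Real.norm_of_nonneg (mul_nonneg (hφ k) (by linarith [Real.cos_le_one (2 * Real.pi * k * x)]))]
    exact mul_le_mul_of_nonneg_left (by linarith [Real.neg_one_le_cos (2 * Real.pi * k * x)]) (hφ k)

lemma one_sub_cos_sub_le (x y : ℝ) :
    1 - Real.cos (x - y) ≤ 2 * (1 - Real.cos x) + 2 * (1 - Real.cos y) := by
  rw [Real.cos_sub]
  nlinarith [Real.sin_sq_add_cos_sq x, Real.sin_sq_add_cos_sq y,
    sq_nonneg (Real.cos x + Real.cos y - 2), sq_nonneg (Real.sin x + Real.sin y)]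

lemma arH_sub (φ : ℕ → ℝ) (hφ : ∀ i, 0 ≤ φ i) (hs : Summable φ) (x y : ℝ) :
    arH φ (x - y) ≤ 2 * arH φ x + 2 * arH φ y := by
  unfold arH
  rw [← tsum_mul_left, ← tsum_mul_left, ← Summable.tsum_add]
  · apply Summable.tsum_le_tsum
    · intro k
      have := one_sub_cos_sub_le (2 * Real.pi * k * x) (2 * Real.pi * k * y)
      rw [← mul_sub] at this
      nlinarith [hφ k]
    · exact arH_summable φ hφ hs _
    · exact ((arH_summable φ hφ hs _).mul_left 2).add ((arH_summable φ hφ hs _).mul_left 2)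
  · exact (arH_summable φ hφ hs _).mul_left 2
  · exact (arH_summable φ hφ hs _).mul_left 2

lemma arH_neg (φ : ℕ → ℝ) (x : ℝ) : arH φ (-x) = arH φ x := by
  unfold arH
  simp

lemma arH_abs (φ : ℕ → ℝ) (x : ℝ) : arH φ |x| = arH φ x := by
  rcases abs_choice x with h | h <;> rw [h]
  exact arH_neg φ x

lemma ar_F_bound (a : ℝ) (ha : 0 < a) (ha1 : a < 1) (φ : ℕ → ℝ) (hφ : ∀ i, 0 ≤ φ i) (h0 : φ 0 = 0)
    (hs : HasSum φ 1) (x : ℝ) :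
    ‖∑' k : ℕ, (arPsi a φ k : ℂ) * fourier (T := 1) (k : ℤ) (x : UnitAddCircle)‖
      ≤ 1 / ((1 - a) + a * arH φ x) := by
  set z : ℕ → ℂ := fun k => fourier (T := 1) (k : ℤ) (x : UnitAddCircle) with hz
  have hznorm : ∀ k, ‖z k‖ = 1 := by
    intro k; simp only [hz]; rw [fourier_apply]; exact Circle.norm_coe _
  have hz0 : z 0 = 1 := by
    simp only [hz]
    exact_mod_cast fourier_zero
  have hzadd : ∀ i j, z (i + j) = z i * z j := by
    intro i j; simp only [hz]; push_cast; exact fourier_add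
  have hzre : ∀ k, (z k).re = Real.cos (2 * Real.pi * k * x) := by
    intro k
    simp only [hz]
    have h1 := fourier_coe_apply (T := 1) (n := (k : ℤ)) (x := x)
    have h2 : (2 * Real.pi * Complex.I * (k : ℤ) * x / (1 : ℝ) : ℂ)
      = ((2 * Real.pi * k * x : ℝ) : ℂ) * Complex.I := by push_cast; ring
    rw [h2] at h1
    exact (congrArg Complex.re h1).trans (Complex.exp_ofReal_mul_I_re _)
  have hpn := arPsi_nonneg a ha.le φ hφ h0
  have hps := arPsi_sum a ha.le ha1 φ hφ h0 hs
  have hS1 : Summable (fun k => ‖(arPsi a φ k : ℂ) * z k‖) := by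
    apply hps.congr; intro k; simp [hznorm, abs_of_nonneg (hpn k)]
  have hS2 : Summable (fun k => ‖(φ k : ℂ) * z k‖) := by
    apply hs.summable.congr; intro k; simp [hznorm, abs_of_nonneg (hφ k)]
  have hC := tsum_mul_tsum_eq_tsum_sum_antidiagonal_of_summable_norm hS2 hS1
  have hCs := (summable_norm_sum_mul_antidiagonal_of_summable_norm hS2 hS1).of_norm
  change ‖∑' k : ℕ, (arPsi a φ k : ℂ) * z k‖ ≤ _
  set F := ∑' k : ℕ, (arPsi a φ k : ℂ) * z k with hF
  set Φ := ∑' k : ℕ, (φ k : ℂ) * z k with hΦ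
  have hone : F = 1 + a * (Φ * F) := by
    rw [hC, ← tsum_mul_left]
    have h1 : HasSum (fun k : ℕ => if k = 0 then (1:ℂ) else 0) 1 := hasSum_ite_eq 0 1
    rw [← h1.tsum_eq, ← Summable.tsum_add h1.summable (hCs.mul_left _), hF]
    congr 1
    ext k
    rw [arPsi_rec a φ h0 k]
    push_cast
    rw [add_mul, mul_assoc, Finset.sum_mul]
    congr 1
    · by_cases hk : k = 0
      · subst hk; simp [hz0]
      · simp [hk]
    · congr 1
      apply Finset.sum_congr rfl
      intro p hp
      rw [← Finset.HasAntidiagonal.mem_antidiagonal.1 hp, hzadd]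
      ring
  have hre : (1 - a * Φ).re = (1 - a) + a * arH φ x := by
    have h1 : HasSum (fun k => φ k * (z k).re) Φ.re := by
      have := Complex.hasSum_re hS2.of_norm.hasSum
      simpa using this
    have h2 : arH φ x = 1 - Φ.re := by
      have := hs.sub h1
      rw [← this.tsum_eq, arH]
      congr 1; ext k; rw [hzre]; ring
    rw [h2]; simp; ring
  have hpos : 0 < (1 - a) + a * arH φ x := by
    have := mul_nonneg ha.le (arH_nonneg φ hφ x); linarith
  have hle : (1 - a) + a * arH φ x ≤ ‖1 - a * Φ‖ := by
    rw [← hre]; exact Complex.re_le_norm _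
  have hmul : ‖F‖ * ‖1 - a * Φ‖ = 1 := by
    rw [← norm_mul, show F * (1 - a * Φ) = 1 by linear_combination hone]; simp
  rw [le_div_iff₀ hpos]
  calc _ ≤ ‖F‖ * ‖1 - a * Φ‖ := by gcongr
    _ = 1 := hmul

lemma arH_lower (φ : ℕ → ℝ) (hφ : ∀ i, 0 ≤ φ i) (hs : HasSum φ 1) (K : ℝ) (hK : 0 < K)
    (htail : Tendsto (fun N : ℕ => (N : ℝ) ^ (1/2 : ℝ) * ∑' i : ℕ, φ (N + i))
      atTop (nhds K)) :
    ∃ c > 0, ∃ m : ℕ, 0 < m ∧ ∀ x : ℝ, |x| ≤ 1 / m → c * √|x| ≤ arH φ x := by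
  have e1 := htail.eventually (lt_mem_nhds (show 3/4 * K < K by linarith))
  have e2 := htail.eventually (gt_mem_nhds (show K < 5/4 * K by linarith))
  obtain ⟨N0, hN0⟩ := eventually_atTop.1 (e1.and e2)
  refine ⟨K / 1200, by positivity, 32 * (N0 + 1), by positivity, ?_⟩
  intro x hx
  rw [← arH_abs]
  rcases eq_or_lt_of_le (abs_nonneg x) with h | hx0
  · rw [← h]; simp; exact arH_nonneg φ hφ 0
  generalize |x| = t at *
  set N := ⌊1 / (32 * t)⌋₊ with hN
  have hNle : (N : ℝ) ≤ 1 / (32 * t) := Nat.floor_le (by positivity)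
  have hNlt : 1 / (32 * t) < N + 1 := Nat.lt_floor_add_one _
  have hbig : (N0 + 1 : ℝ) ≤ 1 / (32 * t) := by
    rw [le_div_iff₀ (by positivity)]
    rw [le_div_iff₀ (by positivity)] at hx
    push_cast at hx; linarith
  have hNN : N0 + 1 ≤ N := Nat.le_floor (by exact_mod_cast hbig)
  have hN1 : (1:ℝ) ≤ N := by exact_mod_cast (by omega : 1 ≤ N)
  rw [le_div_iff₀ (by positivity)] at hNle
  rw [div_lt_iff₀ (by positivity)] at hNlt
  have hNt : 1 / 64 ≤ N * t := by nlinarith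
  have hN16 : (16 * N) * t ≤ 1 / 2 := by nlinarith
  have hT1 := (hN0 N (by omega)).1
  have hT2 := (hN0 (16 * N) (by omega)).2
  have hdiff : ∑' i, φ (N + i) - ∑' i, φ (16 * N + i) = ∑ k ∈ Finset.Ico N (16 * N), φ k := by
    have h1 := hs.summable.sum_add_tsum_nat_add N
    have h2 := hs.summable.sum_add_tsum_nat_add (16 * N)
    rw [Finset.sum_Ico_eq_sub _ (by omega)]
    simp only [add_comm _ N, add_comm _ (16 * N)] at h1 h2
    linarith
  have hlow : 1 / 512 * ∑ k ∈ Finset.Ico N (16 * N), φ k ≤ arH φ t := by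
    calc _ ≤ ∑ k ∈ Finset.Ico N (16 * N), φ k * (1 - Real.cos (2 * Real.pi * k * t)) := by
          rw [Finset.mul_sum]
          apply Finset.sum_le_sum
          intro k hk
          rw [Finset.mem_Ico] at hk
          have hk1 : (N : ℝ) ≤ k := by exact_mod_cast hk.1
          have hk2 : (k : ℝ) ≤ 16 * N := by exact_mod_cast hk.2.le
          have hkt1 : 1 / 64 ≤ k * t := hNt.trans (by gcongr)
          have hkt2 : k * t ≤ 1 / 2 := le_trans (by gcongr) hN16
          have hcos := Real.cos_le_one_sub_mul_cos_sq (x := 2 * Real.pi * k * t) (by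
            rw [abs_of_nonneg (by positivity)]
            nlinarith [Real.pi_pos])
          have : 2 / Real.pi ^ 2 * (2 * Real.pi * k * t) ^ 2 = 8 * (k * t) ^ 2 := by
            field_simp; ring
          rw [this] at hcos
          rw [mul_comm]
          apply mul_le_mul_of_nonneg_left _ (hφ k)
          nlinarith
      _ ≤ _ := (arH_summable φ hφ hs.summable t).sum_le_tsum _ (fun k _ =>
          mul_nonneg (hφ k) (by linarith [Real.cos_le_one (2 * Real.pi * k * t)]))
  rw [← hdiff] at hlow
  rw [← Real.sqrt_eq_rpow] at hT1 hT2
  have hs16 : √((16 * N : ℕ) : ℝ) = 4 * √N := by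
    push_cast
    rw [Real.sqrt_mul (by norm_num), show (16:ℝ) = 4 ^ 2 by norm_num, Real.sqrt_sq (by norm_num)]
  rw [hs16] at hT2
  have hsN : 1 ≤ √(N : ℝ) := Real.one_le_sqrt.2 hN1
  have hst : √(N:ℝ) * √t ≤ 1 := by
    rw [← Real.sqrt_mul (by positivity)]
    apply Real.sqrt_le_one.2; nlinarith
  have hmain : 7 / 16 * K ≤ √(N:ℝ) * (∑' i, φ (N + i) - ∑' i, φ (16 * N + i)) := by nlinarith
  have : √(N:ℝ) * (K / 1200 * √t) ≤ √(N:ℝ) * arH φ t := by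
    calc √(N:ℝ) * (K / 1200 * √t) = K / 1200 * (√(N:ℝ) * √t) := by ring
      _ ≤ K / 1200 * 1 := by gcongr
      _ ≤ 1 / 512 * (7 / 16 * K) := by nlinarith
      _ ≤ 1 / 512 * (√(N:ℝ) * (∑' i, φ (N + i) - ∑' i, φ (16 * N + i))) := by gcongr
      _ = √(N:ℝ) * (1 / 512 * (∑' i, φ (N + i) - ∑' i, φ (16 * N + i))) := by ring
      _ ≤ _ := by gcongr
  exact le_of_mul_le_mul_left this (by linarith)

lemma ar_int_one (B q s : ℝ) (hB : 0 < B) (hq : 0 < q) (hs : 0 ≤ s) (hs1 : s ≤ 1) :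
    ∫ u in (0:ℝ)..s, 1 / (B + q * u) ≤ 1 / q * (Real.log (B + q) - Real.log B) := by
  have h : ∀ u ∈ Set.uIcc 0 s, HasDerivAt (fun u => 1 / q * Real.log (B + q * u)) (1 / (B + q * u)) u := by
    intro u hu
    rw [Set.uIcc_of_le hs] at hu
    have hpos : 0 < B + q * u := by have := mul_nonneg hq.le hu.1; linarith
    have h1 : HasDerivAt (fun u => B + q * u) q u := by
      simpa using ((hasDerivAt_id u).const_mul q).const_add B
    have h2 := (h1.log hpos.ne').const_mul (1 / q)
    have h3 : 1 / q * (q / (B + q * u)) = 1 / (B + q * u) := by field_simp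
    rw [h3] at h2
    exact h2
  rw [intervalIntegral.integral_eq_sub_of_hasDerivAt h]
  · rw [← mul_sub]
    simp only [mul_zero, add_zero]
    have : 0 < B + q * s := by positivity
    have h3 : B + q * s ≤ B + q := by nlinarith
    gcongr
  · apply ContinuousOn.intervalIntegrable
    apply ContinuousOn.div continuousOn_const (by fun_prop)
    intro u hu
    rw [Set.uIcc_of_le hs] at hu
    have hpos : 0 < B + q * u := by have := mul_nonneg hq.le hu.1; linarith
    exact hpos.ne'

lemma ar_int_two (B q s t θ : ℝ) (hB : 0 < B) (hq : 0 < q) (h1 : s ≤ θ) (h2 : θ ≤ t) (h3 : t - s ≤ 1) :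
    ∫ x in s..t, 1 / (B + q * |x - θ|) ≤ 2 * (1 / q * (Real.log (B + q) - Real.log B)) := by
  have hc : Continuous (fun x => 1 / (B + q * |x - θ|)) := by
    apply Continuous.div continuous_const (by fun_prop)
    intro x; positivity
  rw [← intervalIntegral.integral_add_adjacent_intervals (hc.intervalIntegrable s θ) (hc.intervalIntegrable θ t)]
  have e1 : ∫ x in s..θ, 1 / (B + q * |x - θ|) = ∫ u in (0:ℝ)..(θ - s), 1 / (B + q * u) := by
    have := intervalIntegral.integral_comp_sub_left (a := s) (b := θ) (fun u => 1 / (B + q * u)) θ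
    rw [sub_self] at this
    rw [← this]
    apply intervalIntegral.integral_congr
    intro x hx
    rw [Set.uIcc_of_le h1] at hx
    simp only
    rw [abs_of_nonpos (by linarith [hx.2]), neg_sub]
  have e2 : ∫ x in θ..t, 1 / (B + q * |x - θ|) = ∫ u in (0:ℝ)..(t - θ), 1 / (B + q * u) := by
    have := intervalIntegral.integral_comp_sub_right (a := θ) (b := t) (fun u => 1 / (B + q * u)) θ
    rw [sub_self] at this
    rw [← this]
    apply intervalIntegral.integral_congr
    intro x hx
    rw [Set.uIcc_of_le h2] at hx
    simp only
    rw [abs_of_nonneg (by linarith [hx.1])]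
  rw [e1, e2]
  have := ar_int_one B q (θ - s) hB hq (by linarith) (by linarith)
  have := ar_int_one B q (t - θ) hB hq (by linarith) (by linarith)
  linarith

lemma ar_psi_sq_bound (φ : ℕ → ℝ) (hφ : ∀ i, 0 ≤ φ i) (h0 : φ 0 = 0) (hs : HasSum φ 1)
    (K : ℝ) (hK : 0 < K)
    (htail : Tendsto (fun N : ℕ => (N : ℝ) ^ (1/2 : ℝ) * ∑' i : ℕ, φ (N + i))
      atTop (nhds K)) (a0 : ℝ) (ha0 : 0 < a0) :
    ∃ C > 0, ∀ a, a0 ≤ a → a < 1 → ∀ N,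
      ∑ k ∈ Finset.range N, arPsi a φ k ^ 2 ≤ C * |Real.log (1 - a)| := by
  obtain ⟨c, hc, m, hm, hlow⟩ := arH_lower φ hφ hs K hK htail
  by_cases ha01 : a0 < 1
  swap
  · exact ⟨1, one_pos, fun a h1 h2 => by linarith⟩
  set q := (a0 * c / 4) ^ 2 with hqdef
  have hq : 0 < q := by positivity
  have hl0 : 0 < -Real.log (1 - a0) := by
    have := Real.log_neg (x := 1 - a0) (by linarith) (by linarith); linarith
  set l0 := -Real.log (1 - a0)
  have hlq : 0 < Real.log (1 + q) := Real.log_pos (by linarith)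
  refine ⟨m * (2 * (1 / q * (Real.log (1 + q) / l0 + 2))), by positivity, ?_⟩
  intro a haa ha1 N
  have ha : 0 < a := by linarith
  set b := 1 - a with hb
  have hbpos : 0 < b := by linarith
  have hlogb : Real.log b ≤ -l0 := by
    simp only [l0, neg_neg]
    apply Real.log_le_log hbpos; linarith
  have hH := arH_continuous φ hφ hs.summable
  have hpos : ∀ x, 0 < b + a * arH φ x := fun x => by
    have := mul_nonneg ha.le (arH_nonneg φ hφ x); linarith
  set g : ℝ → ℝ := fun x => 1 / (b + a * arH φ x) ^ 2 with hg
  have hgc : Continuous g := by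
    apply Continuous.div continuous_const (by fun_prop)
    intro x; have := hpos x; positivity
  have step1 : ∑ k ∈ Finset.range N, arPsi a φ k ^ 2 ≤ ∫ x in (0:ℝ)..1, g x := by
    refine (ar_bessel _ (arPsi_nonneg a ha.le φ hφ h0) (arPsi_sum a ha.le ha1 φ hφ h0 hs) N).trans ?_
    rw [intervalIntegral.integral_of_le zero_le_one, intervalIntegral.integral_of_le zero_le_one]
    apply integral_mono_of_nonneg
    · exact Eventually.of_forall (fun x => by positivity)
    · have := hgc.intervalIntegrable (μ := volume) 0 1
      exact (intervalIntegrable_iff_integrableOn_Ioc_of_le zero_le_one).1 this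
    · apply Eventually.of_forall
      intro x
      have h1 := ar_F_bound a ha ha1 φ hφ h0 hs x
      have h2 : g x = (1 / ((1 - a) + a * arH φ x)) ^ 2 := by
        simp only [hg, hb]; rw [div_pow, one_pow]
      show _ ≤ g x
      rw [h2]
      exact pow_le_pow_left₀ (norm_nonneg _) h1 2
  have hmR : (0:ℝ) < m := by exact_mod_cast hm
  have step2 : ∀ j : ℕ, ∫ x in ((j:ℝ) / m)..((j + 1 : ℕ) : ℝ) / m, g x
      ≤ 2 * (1 / q * (Real.log (b ^ 2 + q) - Real.log (b ^ 2))) := by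
    intro j
    have hlen : ((j + 1 : ℕ) : ℝ) / m = (j:ℝ) / m + 1 / m := by push_cast; ring
    have hle1 : 1 / (m:ℝ) ≤ 1 := by
      rw [div_le_one hmR]; exact_mod_cast hm
    have hp1 : 0 < 1 / (m:ℝ) := by positivity
    rw [hlen]
    set s := (j:ℝ) / m
    obtain ⟨θ, hθ, hmin⟩ := (isCompact_Icc (a := s) (b := s + 1 / m)).exists_isMinOn
      (Set.nonempty_Icc.2 (by linarith)) hH.continuousOn
    refine le_trans ?_ (ar_int_two (b ^ 2) q s (s + 1 / m) θ (by positivity) hq hθ.1 hθ.2 (by linarith))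
    apply intervalIntegral.integral_mono_on (by linarith) (hgc.intervalIntegrable _ _)
    · apply Continuous.intervalIntegrable
      apply Continuous.div continuous_const (by fun_prop)
      intro x; positivity
    · intro x hx
      have h1 : arH φ θ ≤ arH φ x := hmin hx
      have h2 := arH_sub φ hφ hs.summable x θ
      have h3 := hlow (x - θ) (by rw [abs_le]; constructor <;> linarith [hx.1, hx.2, hθ.1, hθ.2])
      have h4 : c / 4 * √|x - θ| ≤ arH φ x := by linarith
      have h5 : a0 * c / 4 * √|x - θ| ≤ a * arH φ x := by
        calc a0 * c / 4 * √|x - θ| = a0 * (c / 4 * √|x - θ|) := by ring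
          _ ≤ a * arH φ x := by gcongr
      have h6 : q * |x - θ| ≤ (a * arH φ x) ^ 2 := by
        calc q * |x - θ| = (a0 * c / 4 * √|x - θ|) ^ 2 := by
              rw [mul_pow, Real.sq_sqrt (abs_nonneg _)]
          _ ≤ _ := by gcongr
      simp only [hg]
      apply one_div_le_one_div_of_le (by positivity)
      have := mul_nonneg hbpos.le (mul_nonneg ha.le (arH_nonneg φ hφ x))
      nlinarith
  have step3 : ∫ x in (0:ℝ)..1, g x ≤ m * (2 * (1 / q * (Real.log (b ^ 2 + q) - Real.log (b ^ 2)))) := by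
    have h := intervalIntegral.sum_integral_adjacent_intervals (f := g) (μ := volume)
      (a := fun j : ℕ => (j:ℝ) / m) (n := m) (fun k _ => hgc.intervalIntegrable _ _)
    simp only [Nat.cast_zero, zero_div, div_self hmR.ne'] at h
    rw [← h]
    calc _ ≤ ∑ j ∈ Finset.range m, 2 * (1 / q * (Real.log (b ^ 2 + q) - Real.log (b ^ 2))) :=
          Finset.sum_le_sum (fun j _ => step2 j)
      _ = _ := by simp
  refine step1.trans (step3.trans ?_)
  have hlabs : |Real.log b| = -Real.log b := abs_of_neg (by linarith)
  rw [hlabs]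
  have e1 : Real.log (b ^ 2 + q) ≤ Real.log (1 + q) := by
    apply Real.log_le_log (by positivity)
    nlinarith
  have e2 : Real.log (b ^ 2) = 2 * Real.log b := by rw [Real.log_pow]; norm_num
  have e3 : Real.log (1 + q) ≤ Real.log (1 + q) / l0 * (-Real.log b) := by
    rw [div_mul_eq_mul_div, le_div_iff₀ hl0]
    apply mul_le_mul_of_nonneg_left _ hlq.le
    linarith
  rw [e2]
  calc _ ≤ (m:ℝ) * (2 * (1 / q * ((Real.log (1 + q) / l0 + 2) * (-Real.log b)))) := by
        gcongr
        linarith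
    _ = _ := by ring

/-- intermediate bound in the critical case:
`E[(y^n_k)²] ≤ c |log(1−a_n)|`. -/
theorem ar_second_moment_bound_critical
    {Ω : Type*} [MeasurableSpace Ω] (P : Measure Ω) [IsProbabilityMeasure P]
    (φ : ℕ → ℝ) (hφnn : ∀ i, 0 ≤ φ i) (hφ0 : φ 0 = 0) (hφsum : ∑' i : ℕ, φ i = 1)
    (K : ℝ) (hK : 0 < K)
    (htail : Tendsto (fun N : ℕ => (N : ℝ) ^ (1/2 : ℝ) * ∑' i : ℕ, φ (N + i))
      atTop (nhds K))
    (δ : ℝ) (hδ : δ = K * Real.Gamma (1/2) / (1/2))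
    (a : ℕ → ℝ) (ha : ∀ n, 1 ≤ n → 0 < a n ∧ a n < 1)
    (lam : ℝ) (hlam : 0 < lam)
    (haconv : Tendsto (fun n : ℕ => (n : ℝ) ^ (1/2 : ℝ) * (1 - a n))
      atTop (nhds (lam * δ)))
    -- the `ε_k` are iid, square integrable, centered with unit variance
    (ε : ℕ → Ω → ℝ) (hεmeas : ∀ k, Measurable (ε k))
    (hεindep : iIndepFun ε P)
    (hεid : ∀ k, Measure.map (ε k) P = Measure.map (ε 0) P)
    (hεL2 : MemLp (ε 0) 2 P)
    (hεmean : ∫ ω, ε 0 ω ∂P = 0)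
    (hεvar : ∫ ω, (ε 0 ω) ^ 2 ∂P = 1)
    (y : ℕ → ℕ → Ω → ℝ)
    (hy0 : ∀ n, y n 0 = ε 0)
    (hyrec : ∀ n k, 1 ≤ k → ∀ ω,
      y n k ω = ε k ω + ∑ i ∈ Finset.Icc 1 k, a n * φ i * y n (k - i) ω)
    : ∃ c > 0, ∀ n, 1 ≤ n → ∀ k : ℕ,
        ∫ ω, (y n k ω) ^ 2 ∂P ≤ c * |Real.log (1 - a n)| := by
  classical
  have hsumm : Summable φ := by
    by_contra h
    rw [tsum_eq_zero_of_not_summable h] at hφsum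
    norm_num at hφsum
  have hs : HasSum φ 1 := hφsum ▸ hsumm.hasSum
  have hlim : Tendsto a atTop (nhds 1) := by
    have h1 : Tendsto (fun n : ℕ => ((n : ℝ) ^ (1/2 : ℝ))⁻¹) atTop (nhds 0) :=
      ((tendsto_rpow_atTop (by norm_num : (0:ℝ) < 1/2)).comp tendsto_natCast_atTop_atTop).inv_tendsto_atTop
    have h2 := h1.mul haconv
    rw [zero_mul] at h2
    have h3 : Tendsto (fun n => 1 - a n) atTop (nhds 0) := by
      refine h2.congr' ?_
      filter_upwards [eventually_ge_atTop 1] with n hn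
      have : (0:ℝ) < (n : ℝ) ^ (1/2 : ℝ) := Real.rpow_pos_of_pos (by exact_mod_cast hn) _
      rw [← mul_assoc, inv_mul_cancel₀ this.ne', one_mul]
    simpa using h3.const_sub 1
  obtain ⟨a0, ha0, hle⟩ : ∃ a0 > 0, ∀ n, 1 ≤ n → a0 ≤ a n := by
    obtain ⟨M, hM⟩ := eventually_atTop.1 (hlim.eventually (lt_mem_nhds (show (1/2:ℝ) < 1 by norm_num)))
    have key : ∀ M : ℕ, ∃ r > 0, ∀ n, 1 ≤ n → n < M → r ≤ a n := by
      intro M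
      induction M with
      | zero => exact ⟨1, one_pos, fun n _ h => by omega⟩
      | succ M ih =>
        obtain ⟨r, hr, h⟩ := ih
        rcases Nat.eq_zero_or_pos M with h0 | h0
        · exact ⟨r, hr, fun n h1 h2 => by omega⟩
        · refine ⟨min r (a M), lt_min hr (ha M h0).1, fun n h1 h2 => ?_⟩
          rcases Nat.lt_succ_iff_lt_or_eq.1 h2 with h3 | h3
          · exact (min_le_left _ _).trans (h n h1 h3)
          · rw [h3]; exact min_le_right _ _
    obtain ⟨r, hr, h⟩ := key M
    refine ⟨min r (1/2), lt_min hr (by norm_num), fun n hn => ?_⟩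
    rcases lt_or_ge n M with h3 | h3
    · exact (min_le_left _ _).trans (h n hn h3)
    · exact (min_le_right _ _).trans (hM n h3).le
  obtain ⟨C, hC, hbound⟩ := ar_psi_sq_bound φ hφnn hφ0 hs K hK htail a0 ha0
  refine ⟨C, hC, fun n hn k => ?_⟩
  have hrep : ∀ ω, y n k ω = ∑ i ∈ Finset.range (k+1), arPsi (a n) φ (k - i) * ε i ω := fun ω =>
    ar_repr (a n) φ hφ0 (fun j => ε j ω) (fun j => y n j ω) (by simp [hy0]) (fun j hj => hyrec n j hj ω) k
  simp only [hrep]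
  rw [ar_moment P ε hεmeas hεindep hεid hεL2 hεmean hεvar (fun i => arPsi (a n) φ (k - i))]
  have := Finset.sum_range_reflect (fun i => arPsi (a n) φ i ^ 2) (k + 1)
  simp only [Nat.add_sub_cancel] at this
  rw [this]
  exact hbound (a n) (hle n hn) (ha n hn).2 (k + 1)
end
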